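/- arXiv:2410.11170 — 2 statements merged into one kernel-verified Lean document; each statement's English description precedes it below -/
import Mathlib

section
/- For every α > 0, there exists a (−1)-homogeneous axisymmetric no-swirl solution (u,p) ∈ C^∞(S² \ {S, N}) of the stationary Navier–Stokes equations such that lim_{x∈S², x→S} |u(x)|/ln(dist(x,S)) = lim_{x∈S², x→N} |u(x)|/ln(dist(x,N)) = −α. -/
noncomputable section

open Real Filter MeasureTheory Metric Topology
open scoped ENNReal InnerProductSpace

abbrev V3 := EuclideanSpace ℝ (Fin 3)
abbrev V2 := EuclideanSpace ℝ (Fin 2)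

/-- standard basis vector in `ℝ³` -/
def e3 (j : Fin 3) : V3 := EuclideanSpace.single j 1

/-- partial derivative `∂_j f` -/
def pd (j : Fin 3) (f : V3 → ℝ) (x : V3) : ℝ := fderiv ℝ f x (e3 j)

/-- Laplacian on `ℝ³` -/
def lap3 (f : V3 → ℝ) (x : V3) : ℝ := ∑ j, pd j (fun y => pd j f y) x

/-- stationary Navier–Stokes equations `-Δu + (u·∇)u + ∇p = 0`, `div u = 0` at `x` -/
def NSEq (u : V3 → V3) (p : V3 → ℝ) (x : V3) : Prop :=
  (∀ i, - lap3 (fun z => u z i) x + (∑ j, u x j * pd j (fun z => u z i) x) + pd i p x = 0)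
  ∧ (∑ j, pd j (fun z => u z j) x) = 0

/-- stationary Euler equations `(u·∇)u + ∇p = 0`, `div u = 0` at `x` -/
def EulerEq (u : V3 → V3) (p : V3 → ℝ) (x : V3) : Prop :=
  (∀ i, (∑ j, u x j * pd j (fun z => u z i) x) + pd i p x = 0)
  ∧ (∑ j, pd j (fun z => u z j) x) = 0

/-- south pole -/
def S3 : V3 := EuclideanSpace.single 2 (-1)
/-- north pole -/
def N3 : V3 := EuclideanSpace.single 2 1

/-- the unit sphere `S²` -/
def sphere2 : Set V3 := Metric.sphere (0 : V3) 1

/-- the open cone over a subset of the unit sphere -/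
def cone3 (Ω : Set V3) : Set V3 := {x : V3 | x ≠ 0 ∧ (‖x‖⁻¹ • x) ∈ Ω}

/-- `|x'| = √(x₁² + x₂²)` -/
def rho (x : V3) : ℝ := Real.sqrt ((x 0) ^ 2 + (x 1) ^ 2)

/-- the `x₃`-axis `{x' = 0}` -/
def axis3 : Set V3 := {x : V3 | x 0 = 0 ∧ x 1 = 0}

/-- `Ω_{a,b,R} = {a < x₃ < b, |x'| < R}` -/
def OmegaR (a b R : ℝ) : Set V3 := {x : V3 | a < x 2 ∧ x 2 < b ∧ rho x < R}

/-- build a point of `ℝ³` from `x' ∈ ℝ²` and `x₃ ∈ ℝ` -/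
def emb (y : V2) (t : ℝ) : V3 := (EuclideanSpace.equiv (Fin 3) ℝ).symm ![y 0, y 1, t]

/-- spherical component `u_r = u · e_r` -/
def uRc (u : V3 → V3) (x : V3) : ℝ := (u x 0 * x 0 + u x 1 * x 1 + u x 2 * x 2) / ‖x‖

/-- spherical component `u_θ = u · e_θ` -/
def uTc (u : V3 → V3) (x : V3) : ℝ :=
  (u x 0 * x 0 * x 2 + u x 1 * x 1 * x 2) / (‖x‖ * rho x) - u x 2 * rho x / ‖x‖

/-- spherical component `u_φ = u · e_φ` -/
def uPc (u : V3 → V3) (x : V3) : ℝ := (-(u x 0) * x 1 + u x 1 * x 0) / rho x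

/-- axisymmetry on a set: the spherical components are independent of the meridian angle -/
def AxisymOn (u : V3 → V3) (Ω : Set V3) : Prop :=
  ∀ x ∈ Ω, ∀ y ∈ Ω, ‖x‖ = ‖y‖ → x 2 = y 2 →
    uRc u x = uRc u y ∧ uTc u x = uTc u y ∧ uPc u x = uPc u y

/-- spherical frame vector `e_r` -/
def eRv (x : V3) : V3 := ‖x‖⁻¹ • x

/-- spherical frame vector `e_θ` -/
def eThv (x : V3) : V3 := (EuclideanSpace.equiv (Fin 3) ℝ).symm
  ![x 2 * x 0 / (‖x‖ * rho x), x 2 * x 1 / (‖x‖ * rho x), -(rho x) / ‖x‖]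

/-- spherical frame vector `e_φ` -/
def ePhv (x : V3) : V3 := (EuclideanSpace.equiv (Fin 3) ℝ).symm ![-(x 1) / rho x, x 0 / rho x, 0]

/-- the spherical cap `S² ∩ B_δ(S) \ {S}` -/
def NSCap (δ : ℝ) : Set V3 := (sphere2 ∩ Metric.ball S3 δ) \ {S3}

/-- the spherical cap `S² ∩ B_δ(S)` -/
def NSCapFull (δ : ℝ) : Set V3 := sphere2 ∩ Metric.ball S3 δ

/-!
For a function `b` homogeneous of degree `-1`, the velocity `u = (∂₃b) x - b e₃` and the pressure
`p = 2 ∂₃b` solve the stationary Navier–Stokes equations as soon as `Δb + b ∂₃b = 0`. For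
`b = r⁻¹ w(cos θ)` this holds if `w' + w² / 2 = c / (1 - y²)`, and `w = 2 v' / v` turns the Riccati
equation into `(1 - y²) v'' = (c / 2) v`. For `c > 0` the even solution of the linear equation has
nonnegative Taylor coefficients and radius of convergence at least `1`, so `v ≥ 1` on `(-1, 1)` and
`w` is odd and smooth there.

Since `w` grows only logarithmically, integrating the Riccati equation gives
`w(y) = -(c / 2) log (1 - y) + O(1)` as `y → 1`. The logarithm of the distance `d` to a pole `P`
is `(1 / 2) log (1 - |cos θ|) + O(1)`, hence `u / log d → 2 c P`, and `c = α / 2` gives the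
prescribed rate.
-/

section PowerSeriesSolution

open FormalMultilinearSeries

lemma hasFPowerSeriesOnBall_deriv_ofScalars {𝕜 : Type*} [NontriviallyNormedField 𝕜]
    [CompleteSpace 𝕜] {f : 𝕜 → 𝕜} {c : ℕ → 𝕜} {x : 𝕜} {r : ℝ≥0∞}
    (h : HasFPowerSeriesOnBall f (ofScalars 𝕜 c) x r) :
    HasFPowerSeriesOnBall (deriv f) (ofScalars 𝕜 fun n ↦ (n + 1) * c (n + 1)) x r := by
  suffices hseries : (ofScalars 𝕜 fun n ↦ (n + 1) * c (n + 1)) =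
      (ContinuousLinearMap.apply 𝕜 𝕜 (1 : 𝕜)).compFormalMultilinearSeries
        (ofScalars 𝕜 c).derivSeries by
    rw [hseries]
    exact (ContinuousLinearMap.apply 𝕜 𝕜 (1 : 𝕜)).comp_hasFPowerSeriesOnBall h.fderiv
  refine FormalMultilinearSeries.ext fun n ↦ ?_
  rw [← mkPiRing_coeff_eq (ofScalars 𝕜 _) n,
    ← mkPiRing_coeff_eq (ContinuousLinearMap.compFormalMultilinearSeries _ _) n]
  congr 1
  have hcoeff := derivSeries_coeff_one (ofScalars 𝕜 c) n
  rw [coeff_ofScalars, nsmul_eq_mul] at hcoeff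
  rw [coeff_ofScalars]
  exact_mod_cast hcoeff.symm

/-- Taylor coefficients at `0` of the even solution of `(1 - y²) v'' = k v` with `v 0 = 1`. -/
def evenSolCoeff (k : ℝ) : ℕ → ℝ
  | 0 => 1
  | 1 => 0
  | n + 2 => (n * (n - 1) + k) / ((n + 2) * (n + 1)) * evenSolCoeff k n

lemma evenSolCoeff_nonneg {k : ℝ} (hk : 0 ≤ k) : ∀ n, 0 ≤ evenSolCoeff k n
  | 0 => by simp [evenSolCoeff]
  | 1 => by simp [evenSolCoeff]
  | n + 2 => by
    have hn : (0 : ℝ) ≤ n * (n - 1) := by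
      rcases n with _ | n
      · simp
      · push_cast
        have : (0 : ℝ) ≤ (n + 1) * n := by positivity
        linarith
    have := evenSolCoeff_nonneg hk n
    rw [evenSolCoeff]
    positivity

lemma evenSolCoeff_eq_zero_of_odd (k : ℝ) : ∀ {n : ℕ}, Odd n → evenSolCoeff k n = 0
  | 0, h => by simp at h
  | 1, _ => rfl
  | n + 2, h => by
    rw [evenSolCoeff, evenSolCoeff_eq_zero_of_odd k (by simpa [Nat.odd_add] using h), mul_zero]

lemma evenSolCoeff_recurrence (k : ℝ) (n : ℕ) :
    (n + 2) * (n + 1) * evenSolCoeff k (n + 2) = (n * (n - 1) + k) * evenSolCoeff k n := by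
  rw [evenSolCoeff]
  field_simp

lemma exists_evenSolCoeff_le {k : ℝ} (hk : 0 ≤ k) : ∃ C, ∀ n, evenSolCoeff k n ≤ C := by
  obtain ⟨N, hN⟩ := exists_nat_gt k
  refine ⟨∑ i ∈ Finset.range (N + 2), evenSolCoeff k i, fun n ↦ ?_⟩
  induction n using Nat.strong_induction_on with
  | _ n ih =>
    by_cases hn : n < N + 2
    · exact Finset.single_le_sum (fun i _ ↦ evenSolCoeff_nonneg hk i) (by simpa using hn)
    · obtain ⟨j, rfl⟩ : ∃ j, n = j + 2 := ⟨n - 2, by lia⟩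
      have hj : (N : ℝ) ≤ j := by exact_mod_cast (by lia : N ≤ j)
      refine le_trans ?_ (ih j (by lia))
      refine mul_le_of_le_one_left (evenSolCoeff_nonneg hk j) ?_
      rw [div_le_one (by positivity)]
      linarith

lemma one_le_radius_evenSolCoeff {k : ℝ} (hk : 0 ≤ k) :
    1 ≤ (ofScalars ℝ (evenSolCoeff k)).radius := by
  obtain ⟨C, hC⟩ := exists_evenSolCoeff_le hk
  refine le_radius_of_bound (r := 1) _ C fun n ↦ ?_
  simpa [ofScalars_norm, abs_of_nonneg (evenSolCoeff_nonneg hk n)] using hC n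

/-- The even solution of `(1 - y²) v'' = k v` on `(-1, 1)` with `v 0 = 1`, as a power series.
Outside the interval of convergence its value is meaningless. -/
def evenSol (k : ℝ) : ℝ → ℝ := ofScalarsSum (evenSolCoeff k)

lemma hasFPowerSeriesOnBall_evenSol {k : ℝ} (hk : 0 ≤ k) :
    HasFPowerSeriesOnBall (evenSol k) (ofScalars ℝ (evenSolCoeff k)) 0 1 :=
  have h := one_le_radius_evenSolCoeff hk
  ((ofScalars ℝ (evenSolCoeff k)).hasFPowerSeriesOnBall (one_pos.trans_le h)).mono one_pos h

lemma hasSum_of_hasFPowerSeriesOnBall_ofScalars {f : ℝ → ℝ} {c : ℕ → ℝ}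
    (h : HasFPowerSeriesOnBall f (ofScalars ℝ c) 0 1) {y : ℝ} (hy : y ∈ Set.Ioo (-1) 1) :
    HasSum (fun n ↦ c n * y ^ n) (f y) := by
  have hy' : y ∈ Metric.eball (0 : ℝ) 1 := by
    rw [← ENNReal.ofReal_one, Metric.eball_ofReal]
    simpa [abs_lt] using hy
  simpa [ofScalars_apply_eq, mul_comm] using h.hasSum hy'

lemma even_evenSol (k : ℝ) : Function.Even (evenSol k) := fun y ↦ by
  simp only [evenSol, ofScalars_sum_eq, smul_eq_mul]
  refine tsum_congr fun n ↦ ?_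
  rcases n.even_or_odd with hn | hn
  · rw [hn.neg_pow]
  · simp [evenSolCoeff_eq_zero_of_odd k hn]

section

variable {k : ℝ} (hk : 0 ≤ k) {y : ℝ}
include hk

lemma one_le_evenSol (hy : y ∈ Set.Ioo (-1) 1) : 1 ≤ evenSol k y := by
  have hs := hasSum_of_hasFPowerSeriesOnBall_ofScalars (hasFPowerSeriesOnBall_evenSol hk) hy
  have hterm (n : ℕ) : 0 ≤ evenSolCoeff k n * y ^ n := by
    rcases n.even_or_odd with hn | hn
    · exact mul_nonneg (evenSolCoeff_nonneg hk n) (hn.pow_nonneg y)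
    · simp [evenSolCoeff_eq_zero_of_odd k hn]
  simpa [evenSolCoeff] using le_hasSum hs 0 fun n _ ↦ hterm n

lemma deriv_evenSol_nonneg (hy : y ∈ Set.Ico 0 1) : 0 ≤ deriv (evenSol k) y := by
  have hs := hasSum_of_hasFPowerSeriesOnBall_ofScalars
    (hasFPowerSeriesOnBall_deriv_ofScalars (hasFPowerSeriesOnBall_evenSol hk))
    ⟨neg_one_lt_zero.trans_le hy.1, hy.2⟩
  refine hs.nonneg fun n ↦ ?_
  have := evenSolCoeff_nonneg hk (n + 1)
  have := hy.1
  positivity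

lemma analyticAt_evenSol (hy : y ∈ Set.Ioo (-1) 1) : AnalyticAt ℝ (evenSol k) y := by
  refine (hasFPowerSeriesOnBall_evenSol hk).analyticAt_of_mem ?_
  rw [← ENNReal.ofReal_one, Metric.eball_ofReal]
  simpa [abs_lt] using hy

lemma evenSol_ode (hy : y ∈ Set.Ioo (-1) 1) :
    (1 - y ^ 2) * deriv (deriv (evenSol k)) y = k * evenSol k y := by
  have hv := hasFPowerSeriesOnBall_evenSol hk
  have hsum := hasSum_of_hasFPowerSeriesOnBall_ofScalars hv hy
  have hsum'' := hasSum_of_hasFPowerSeriesOnBall_ofScalars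
    (hasFPowerSeriesOnBall_deriv_ofScalars (hasFPowerSeriesOnBall_deriv_ofScalars hv)) hy
  have hshift : HasSum (fun n : ℕ ↦ n * (n - 1) * evenSolCoeff k n * y ^ n)
      (y ^ 2 * deriv (deriv (evenSol k)) y) := by
    refine (hasSum_nat_add_iff' 2).1 ?_
    simp only [Finset.sum_range_succ, Finset.sum_range_zero, Nat.cast_zero, Nat.cast_one,
      sub_self, zero_mul, mul_zero, add_zero, sub_zero]
    refine (hsum''.mul_left (y ^ 2)).congr_fun fun n ↦ ?_
    push_cast
    ring
  have hdiff : HasSum (fun n : ℕ ↦ n * (n - 1) * evenSolCoeff k n * y ^ n)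
      (deriv (deriv (evenSol k)) y - k * evenSol k y) := by
    refine (hsum''.sub (hsum.mul_left k)).congr_fun fun n ↦ ?_
    push_cast
    linear_combination -(y ^ n) * evenSolCoeff_recurrence k n
  linear_combination hdiff.unique hshift

end

end PowerSeriesSolution

section RealAnalysis

lemma one_sub_sq_pos {y : ℝ} (hy : y ∈ Set.Ioo (-1) 1) : 0 < 1 - y ^ 2 := by
  nlinarith [hy.1, hy.2]

lemma odd_logDeriv_of_even {f : ℝ → ℝ} (hf : Function.Even f) : Function.Odd (logDeriv f) := by
  intro y
  have h := deriv_comp_neg f y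
  rw [funext hf] at h
  rw [logDeriv_apply, logDeriv_apply, hf, h, neg_div, neg_neg]

lemma monotoneOn_of_hasDerivAt_nonneg {D : Set ℝ} (hD : Convex ℝ D) {f f' : ℝ → ℝ}
    (hf : ∀ x ∈ D, HasDerivAt f (f' x) x) (hf' : ∀ x ∈ D, 0 ≤ f' x) : MonotoneOn f D :=
  monotoneOn_of_hasDerivWithinAt_nonneg hD (fun x hx ↦ (hf x hx).continuousAt.continuousWithinAt)
    (fun x hx ↦ (hf x (interior_subset hx)).hasDerivWithinAt)
    fun x hx ↦ hf' x (interior_subset hx)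

lemma hasDerivAt_log_one_sub {y : ℝ} (hy : y < 1) :
    HasDerivAt (fun y ↦ log (1 - y)) (-(1 - y)⁻¹) y := by
  simpa [neg_div] using ((hasDerivAt_id y).const_sub 1).log (sub_pos.2 hy).ne'

lemma hasDerivAt_sqrt_one_sub {y : ℝ} (hy : y < 1) :
    HasDerivAt (fun y ↦ √(1 - y)) (-(2 * √(1 - y))⁻¹) y := by
  simpa [neg_div] using ((hasDerivAt_id y).const_sub 1).sqrt (sub_pos.2 hy).ne'

lemma sq_log_mul_sqrt_le {x : ℝ} (hx : 0 < x) (hx1 : x ≤ 1) : log x ^ 2 * √x ≤ 16 := by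
  have h := abs_log_mul_self_rpow_lt x (1 / 4) hx hx1 (by norm_num)
  have hsq : (x ^ (1 / 4 : ℝ)) ^ 2 = √x := by
    rw [sqrt_eq_rpow, ← rpow_natCast, ← rpow_mul hx.le]
    norm_num
  have := pow_le_pow_left₀ (abs_nonneg _) h.le 2
  rw [sq_abs, mul_pow, hsq] at this
  exact this.trans_eq (by norm_num)

lemma tendsto_two_mul_one_sub : Tendsto (fun y : ℝ ↦ 2 * (1 - y)) (𝓝[<] 1) (𝓝[>] 0) := by
  refine tendsto_nhdsWithin_iff.2 ⟨?_, eventually_mem_nhdsWithin.mono fun y (hy : y < 1) ↦ ?_⟩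
  · have : ContinuousAt (fun y : ℝ ↦ 2 * (1 - y)) 1 := by fun_prop
    simpa using this.tendsto.mono_left nhdsWithin_le_nhds
  · simp [hy]

-- On the unit sphere, `log (2 * (1 - y)) / 2` is the logarithm of the distance from a point with
-- `x₃ = y` to the north pole.
lemma tendsto_half_log_two_mul_one_sub :
    Tendsto (fun y : ℝ ↦ log (2 * (1 - y)) / 2) (𝓝[<] 1) atBot :=
  (tendsto_log_nhdsGT_zero.comp tendsto_two_mul_one_sub).atBot_div_const two_pos

lemma tendsto_one_sub_sq_mul_half_log :
    Tendsto (fun y : ℝ ↦ (1 - y ^ 2) * (log (2 * (1 - y)) / 2)) (𝓝[<] 1) (𝓝 0) := by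
  have hlog := (tendsto_log_mul_rpow_nhdsGT_zero one_pos).comp tendsto_two_mul_one_sub
  have hlin : Tendsto (fun y : ℝ ↦ (1 + y) / 4) (𝓝[<] 1) (𝓝 ((1 + 1) / 4)) :=
    ((continuous_const.add continuous_id).div_const 4).continuousAt.tendsto.mono_left
      nhdsWithin_le_nhds
  have := hlin.mul hlog
  rw [mul_zero] at this
  refine this.congr fun y ↦ ?_
  simp only [Function.comp_apply, rpow_one]
  ring

end RealAnalysis

section Riccati

/-- `w` solves the Riccati equation `w' + w² / 2 = c / (1 - y²)` on `(-1, 1)`. It is the profile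
equation for `r u_θ / sin θ = w (cos θ)`. -/
def IsRiccatiSolution (c : ℝ) (w : ℝ → ℝ) : Prop :=
  ∀ y ∈ Set.Ioo (-1 : ℝ) 1, HasDerivAt w (c / (1 - y ^ 2) - w y ^ 2 / 2) y

-- The substitution `w = 2 v' / v` linearizes the Riccati equation.
lemma isRiccatiSolution_logDeriv_evenSol {c : ℝ} (hc : 0 ≤ c) :
    IsRiccatiSolution c fun y ↦ 2 * logDeriv (evenSol (c / 2)) y := fun y hy ↦ by
  have hc' : 0 ≤ c / 2 := by positivity
  have hv := analyticAt_evenSol hc' hy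
  have hv0 : evenSol (c / 2) y ≠ 0 := (one_pos.trans_le (one_le_evenSol hc' hy)).ne'
  have hy0 := (one_sub_sq_pos hy).ne'
  refine ((hv.deriv.differentiableAt.hasDerivAt.div hv.differentiableAt.hasDerivAt
    hv0).const_mul 2).congr_deriv ?_
  simp only [logDeriv_apply]
  field_simp
  linear_combination 2 * evenSol (c / 2) y * evenSol_ode hc' hy

lemma exists_isRiccatiSolution {c : ℝ} (hc : 0 ≤ c) :
    ∃ w, IsRiccatiSolution c w ∧ Function.Odd w ∧ ∀ y ∈ Set.Ico 0 1, 0 ≤ w y := by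
  have hc' : 0 ≤ c / 2 := by positivity
  refine ⟨_, isRiccatiSolution_logDeriv_evenSol hc, fun y ↦ ?_, fun y hy ↦ ?_⟩
  · simp only [odd_logDeriv_of_even (even_evenSol (c / 2)) y, mul_neg]
  · have := one_le_evenSol hc' ⟨neg_one_lt_zero.trans_le hy.1, hy.2⟩
    exact mul_nonneg zero_le_two (div_nonneg (deriv_evenSol_nonneg hc' hy) (by linarith))

namespace IsRiccatiSolution

variable {c : ℝ} {w : ℝ → ℝ} (hw : IsRiccatiSolution c w)
include hw

lemma contDiffOn : ContDiffOn ℝ (⊤ : ℕ∞) w (Set.Ioo (-1) 1) := by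
  refine contDiffOn_infty.2 fun n ↦ ?_
  induction n with
  | zero => exact contDiffOn_zero.2 fun y hy ↦ (hw y hy).continuousAt.continuousWithinAt
  | succ n ih =>
    refine (contDiffOn_succ_iff_deriv_of_isOpen (n := n) isOpen_Ioo).2
      ⟨fun y hy ↦ (hw y hy).differentiableAt.differentiableWithinAt, by simp, ?_⟩
    have hrhs : ContDiffOn ℝ n (fun y ↦ c / (1 - y ^ 2) - w y ^ 2 / 2) (Set.Ioo (-1) 1) :=
      (contDiffOn_const.div (by fun_prop) fun y hy ↦ (one_sub_sq_pos hy).ne').sub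
        ((ih.pow 2).div_const 2)
    exact hrhs.congr fun y hy ↦ (hw y hy).deriv

variable (hc : 0 ≤ c) (h0 : w 0 = 0)
include hc h0

lemma le_sub_log {y : ℝ} (hy : y ∈ Set.Ico 0 1) : w y ≤ c / 2 * (y - log (1 - y)) := by
  have hmono : MonotoneOn (fun z ↦ c / 2 * (z - log (1 - z)) - w z) (Set.Ico 0 1) := by
    refine monotoneOn_of_hasDerivAt_nonneg (convex_Ico 0 1) (fun z hz ↦
      (((hasDerivAt_id z).sub (hasDerivAt_log_one_sub hz.2)).const_mul (c / 2)).sub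
        (hw z ⟨neg_one_lt_zero.trans_le hz.1, hz.2⟩)) fun z hz ↦ ?_
    have hz1 : 0 < 1 - z := sub_pos.2 hz.2
    have hz2 : 0 < 1 + z := by linarith [hz.1]
    have hdrift : c / 2 * (1 - -(1 - z)⁻¹) - c / (1 - z ^ 2) = c * z / (2 * (1 + z)) := by
      rw [show 1 - z ^ 2 = (1 - z) * (1 + z) by ring]
      field_simp
      ring
    have : 0 ≤ c * z / (2 * (1 + z)) := by have := hz.1; positivity
    linarith [sq_nonneg (w z)]
  have := hmono ⟨le_rfl, one_pos⟩ hy hy.1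
  simp only [h0, sub_zero, log_one, mul_zero, sub_nonneg] at this
  exact this

lemma le_neg_log {y : ℝ} (hy : y ∈ Set.Ico 0 1) : w y ≤ -c * log (1 - y) := by
  nlinarith [hw.le_sub_log hc h0 hy, log_le_sub_one_of_pos (sub_pos.2 hy.2)]

variable (hwnn : ∀ y ∈ Set.Ico 0 1, 0 ≤ w y)
include hwnn

lemma sq_half_le {y : ℝ} (hy : y ∈ Set.Ico 0 1) : w y ^ 2 / 2 ≤ 8 * c ^ 2 / √(1 - y) := by
  have hy1 : 0 < 1 - y := sub_pos.2 hy.2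
  rw [le_div_iff₀ (sqrt_pos.2 hy1)]
  have hsq : w y ^ 2 ≤ c ^ 2 * log (1 - y) ^ 2 := by
    simpa [mul_pow] using pow_le_pow_left₀ (hwnn y hy) (hw.le_neg_log hc h0 hy) 2
  calc w y ^ 2 / 2 * √(1 - y) ≤ c ^ 2 * log (1 - y) ^ 2 / 2 * √(1 - y) := by gcongr
    _ = c ^ 2 / 2 * (log (1 - y) ^ 2 * √(1 - y)) := by ring
    _ ≤ c ^ 2 / 2 * 16 := by
      gcongr
      exact sq_log_mul_sqrt_le hy1 (by linarith [hy.1])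
    _ = 8 * c ^ 2 := by ring

-- The comparison term `16 c² √(1 - z)` absorbs `w² / 2 = O((1 - z)^(-1/2))`.
lemma neg_log_sub_le {y : ℝ} (hy : y ∈ Set.Ico 0 1) :
    -(c / 2) * log (1 - y) - 16 * c ^ 2 ≤ w y := by
  have hmono : MonotoneOn (fun z ↦ w z + c / 2 * log (1 - z) - 16 * c ^ 2 * √(1 - z))
      (Set.Ico 0 1) := by
    refine monotoneOn_of_hasDerivAt_nonneg (convex_Ico 0 1) (fun z hz ↦
      ((hw z ⟨neg_one_lt_zero.trans_le hz.1, hz.2⟩).add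
        ((hasDerivAt_log_one_sub hz.2).const_mul (c / 2))).sub
          ((hasDerivAt_sqrt_one_sub hz.2).const_mul (16 * c ^ 2))) fun z hz ↦ ?_
    have hz1 : 0 < 1 - z := sub_pos.2 hz.2
    have hz2 : 0 < 1 + z := by linarith [hz.1]
    have hdrift : c / (1 - z ^ 2) + c / 2 * -(1 - z)⁻¹ = c / (2 * (1 + z)) := by
      rw [show 1 - z ^ 2 = (1 - z) * (1 + z) by ring]
      field_simp
      ring
    have hsqrt : 16 * c ^ 2 * -(2 * √(1 - z))⁻¹ = -(8 * c ^ 2 / √(1 - z)) := by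
      field_simp
      ring
    have : 0 ≤ c / (2 * (1 + z)) := by positivity
    linarith [hw.sq_half_le hc h0 hwnn hz]
  have := hmono ⟨le_rfl, one_pos⟩ hy hy.1
  simp only [h0, sub_zero, log_one, mul_zero, sqrt_one, mul_one] at this
  have := mul_nonneg (sq_nonneg c) (sqrt_nonneg (1 - y))
  linarith

lemma abs_add_log_le {y : ℝ} (hy : y ∈ Set.Ico 0 1) :
    |w y + c / 2 * log (1 - y)| ≤ c / 2 + 16 * c ^ 2 := by
  have hupper := hw.le_sub_log hc h0 hy
  have hlower := hw.neg_log_sub_le hc h0 hwnn hy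
  have hcy : c / 2 * y ≤ c / 2 := mul_le_of_le_one_right (by positivity) hy.2.le
  rw [abs_le]
  constructor <;> linarith [sq_nonneg c]

lemma tendsto_div_log :
    Tendsto (fun y ↦ w y / (log (2 * (1 - y)) / 2)) (𝓝[<] 1) (𝓝 (-c)) := by
  have hbdd : ∀ᶠ y in 𝓝[<] 1,
      |w y + c * (log (2 * (1 - y)) / 2)| ≤ c / 2 + 16 * c ^ 2 + c / 2 * log 2 := by
    filter_upwards [Ioo_mem_nhdsLT one_pos] with y hy
    rw [log_mul two_ne_zero (sub_pos.2 hy.2).ne', show w y + c * ((log 2 + log (1 - y)) / 2) =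
      (w y + c / 2 * log (1 - y)) + c / 2 * log 2 by ring]
    have hlog2 : 0 ≤ c / 2 * log 2 := mul_nonneg (by positivity) (log_nonneg one_le_two)
    refine (abs_add_le _ _).trans ?_
    rw [abs_of_nonneg hlog2]
    gcongr
    exact hw.abs_add_log_le hc h0 hwnn ⟨hy.1.le, hy.2⟩
  have hquot := (tendsto_inv_atBot_zero.comp
    tendsto_half_log_two_mul_one_sub).zero_mul_isBoundedUnder_le
      (isBoundedUnder_of_eventually_le hbdd)
  have := hquot.sub_const c
  rw [zero_sub] at this
  refine this.congr' ?_
  filter_upwards [tendsto_half_log_two_mul_one_sub.eventually_lt_atBot 0] with y hy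
  have hL := hy.ne
  simp only [Function.comp_apply]
  generalize log (2 * (1 - y)) / 2 = L at hL
  field_simp
  ring

-- The numerator is the restriction of `∂₃ (r⁻¹ w(cos θ))` to the unit sphere.
lemma tendsto_axialDeriv_div_log :
    Tendsto (fun y ↦ (c - (1 - y ^ 2) * w y ^ 2 / 2 - y * w y) / (log (2 * (1 - y)) / 2))
      (𝓝[<] 1) (𝓝 c) := by
  have hw' := hw.tendsto_div_log hc h0 hwnn
  have hconst := (tendsto_inv_atBot_zero.comp tendsto_half_log_two_mul_one_sub).const_mul c
  have hquad := (tendsto_one_sub_sq_mul_half_log.mul (hw'.pow 2)).div_const 2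
  have hlin := (tendsto_id.mono_left (nhdsWithin_le_nhds (a := (1 : ℝ)))).mul hw'
  have := (hconst.sub hquad).sub hlin
  rw [show c * 0 - 0 * (-c) ^ 2 / 2 - 1 * -c = c by ring] at this
  refine this.congr' ?_
  filter_upwards [tendsto_half_log_two_mul_one_sub.eventually_lt_atBot 0] with y hy
  have := hy.ne
  simp only [Function.comp_apply, id]
  field_simp

end IsRiccatiSolution

end Riccati

section PartialDerivatives

variable {f g : V3 → ℝ} {x : V3} (i j : Fin 3)

lemma pd_congr (h : f =ᶠ[𝓝 x] g) : pd j f x = pd j g x := by rw [pd, pd, h.fderiv_eq]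

lemma pd_const (c : ℝ) : pd j (fun _ ↦ c) x = 0 := by simp [pd]

lemma pd_coord : pd j (fun y ↦ y i) x = if i = j then 1 else 0 := by
  have h : HasFDerivAt (fun y : V3 ↦ y i) (EuclideanSpace.proj i : V3 →L[ℝ] ℝ) x :=
    (EuclideanSpace.proj i : V3 →L[ℝ] ℝ).hasFDerivAt
  simp [pd, h.fderiv, e3]

lemma pd_add (hf : DifferentiableAt ℝ f x) (hg : DifferentiableAt ℝ g x) :
    pd j (fun y ↦ f y + g y) x = pd j f x + pd j g x := by
  rw [pd, fderiv_fun_add hf hg]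
  rfl

lemma pd_sub (hf : DifferentiableAt ℝ f x) (hg : DifferentiableAt ℝ g x) :
    pd j (fun y ↦ f y - g y) x = pd j f x - pd j g x := by
  rw [pd, fderiv_fun_sub hf hg]
  rfl

lemma pd_mul (hf : DifferentiableAt ℝ f x) (hg : DifferentiableAt ℝ g x) :
    pd j (fun y ↦ f y * g y) x = f x * pd j g x + pd j f x * g x := by
  rw [pd, fderiv_fun_mul hf hg]
  simp [pd, mul_comm]

lemma pd_comp {φ : ℝ → ℝ} {φ' : ℝ} (hφ : HasDerivAt φ φ' (f x)) (hf : DifferentiableAt ℝ f x) :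
    pd j (fun y ↦ φ (f y)) x = φ' * pd j f x := by
  have h := hφ.comp_hasFDerivAt x hf.hasFDerivAt
  rw [pd, show (fun y ↦ φ (f y)) = φ ∘ f from rfl, h.fderiv]
  simp [pd]

lemma contDiffAt_pd {m n : WithTop ℕ∞} (hf : ContDiffAt ℝ n f x) (hmn : m + 1 ≤ n) :
    ContDiffAt ℝ m (pd j f) x :=
  (hf.fderiv_right hmn).clm_apply contDiffAt_const

lemma pd_pd_comm (hf : ContDiffAt ℝ 2 f x) : pd i (pd j f) x = pd j (pd i f) x := by
  have hsymm := hf.isSymmSndFDerivAt (by simp)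
  have hd : DifferentiableAt ℝ (fderiv ℝ f) x :=
    (hf.fderiv_right (m := 1) (by norm_num)).differentiableAt one_ne_zero
  have hpd (k l : Fin 3) : pd k (pd l f) x = fderiv ℝ (fderiv ℝ f) x (e3 k) (e3 l) := by
    simp [pd, funext fun y ↦ show pd l f y = fderiv ℝ f y (e3 l) from rfl,
      fderiv_clm_apply hd (differentiableAt_const _)]
  rw [hpd, hpd, hsymm]

lemma sum_coord_mul_pd (f : V3 → ℝ) (x : V3) : ∑ j, x j * pd j f x = fderiv ℝ f x x := by
  have h := congrArg (fderiv ℝ f x) ((EuclideanSpace.basisFun (Fin 3) ℝ).sum_repr x)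
  simpa [pd, e3] using h

lemma sum_coord_mul_pd_of_homogeneous {n : ℤ} (hf : DifferentiableAt ℝ f x)
    (h : ∀ t : ℝ, 0 < t → f (t • x) = t ^ n * f x) : ∑ j, x j * pd j f x = n * f x := by
  have hray : HasDerivAt (fun t : ℝ ↦ t • x) x 1 := by
    simpa using (hasDerivAt_id (1 : ℝ)).smul_const x
  have hchain : HasDerivAt (fun t : ℝ ↦ f (t • x)) (fderiv ℝ f x x) 1 := by
    have hf' : HasFDerivAt f (fderiv ℝ f x) ((1 : ℝ) • x) := by simpa using hf.hasFDerivAt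
    exact hf'.comp_hasDerivAt 1 hray
  have hpow : HasDerivAt (fun t : ℝ ↦ t ^ n * f x) (n * f x) 1 := by
    simpa using (hasDerivAt_zpow n (1 : ℝ) (.inl one_ne_zero)).mul_const (f x)
  rw [sum_coord_mul_pd]
  refine hchain.unique (hpow.congr_of_eventuallyEq ?_)
  filter_upwards [lt_mem_nhds one_pos] with t ht using h t ht

lemma pd_smul_of_homogeneous {s t : ℝ} (ht : t ≠ 0) (h : ∀ y, f (t • y) = s * f y) (x : V3) :
    pd j f (t • x) = t⁻¹ * s * pd j f x := by
  have hsmul : pd j (fun y ↦ f (t • y)) x = t * pd j f (t • x) := by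
    simp [pd, fderiv_comp_smul]
  have hconst : pd j (fun y ↦ s * f y) x = s * pd j f x := by
    rw [pd, show (fun y ↦ s * f y) = s • f from rfl, fderiv_const_smul_field]
    rfl
  rw [funext h, hconst] at hsmul
  rw [mul_assoc, hsmul, inv_mul_cancel_left₀ ht]

end PartialDerivatives

section Laplacian

variable {f g : V3 → ℝ} {x : V3}

lemma lap3_const (c : ℝ) : lap3 (fun _ ↦ c) x = 0 := by simp [lap3, pd_const]

lemma lap3_coord (i : Fin 3) : lap3 (fun y ↦ y i) x = 0 := by simp [lap3, pd_coord, pd_const]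

lemma differentiableAt_pd (hf : ContDiffAt ℝ 2 f x) (j : Fin 3) : DifferentiableAt ℝ (pd j f) x :=
  (contDiffAt_pd (m := 1) j hf (by norm_num)).differentiableAt one_ne_zero

lemma eventually_differentiableAt_of_contDiffAt {n : ℕ} (hf : ContDiffAt ℝ n f x) (hn : n ≠ 0) :
    ∀ᶠ y in 𝓝 x, DifferentiableAt ℝ f y :=
  (hf.eventually (by simp)).mono fun _ hy ↦ hy.differentiableAt (by simpa using hn)

lemma lap3_sub (hf : ContDiffAt ℝ 2 f x) (hg : ContDiffAt ℝ 2 g x) :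
    lap3 (fun y ↦ f y - g y) x = lap3 f x - lap3 g x := by
  rw [lap3, lap3, lap3, ← Finset.sum_sub_distrib]
  refine Finset.sum_congr rfl fun j _ ↦ ?_
  have hpd : (fun y ↦ pd j (fun y ↦ f y - g y) y) =ᶠ[𝓝 x] fun y ↦ pd j f y - pd j g y := by
    filter_upwards [eventually_differentiableAt_of_contDiffAt hf two_ne_zero,
      eventually_differentiableAt_of_contDiffAt hg two_ne_zero] with y hfy hgy
    exact pd_sub j hfy hgy
  rw [pd_congr j hpd, pd_sub j (differentiableAt_pd hf j) (differentiableAt_pd hg j)]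

lemma lap3_mul (hf : ContDiffAt ℝ 2 f x) (hg : ContDiffAt ℝ 2 g x) :
    lap3 (fun y ↦ f y * g y) x =
      f x * lap3 g x + 2 * ∑ j, pd j f x * pd j g x + lap3 f x * g x := by
  have hfd := hf.differentiableAt two_ne_zero
  have hgd := hg.differentiableAt two_ne_zero
  rw [lap3, lap3, lap3, Finset.mul_sum, Finset.mul_sum, Finset.sum_mul,
    ← Finset.sum_add_distrib, ← Finset.sum_add_distrib]
  refine Finset.sum_congr rfl fun j _ ↦ ?_
  have hpd : (fun y ↦ pd j (fun y ↦ f y * g y) y) =ᶠ[𝓝 x]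
      fun y ↦ f y * pd j g y + pd j f y * g y := by
    filter_upwards [eventually_differentiableAt_of_contDiffAt hf two_ne_zero,
      eventually_differentiableAt_of_contDiffAt hg two_ne_zero] with y hfy hgy
    exact pd_mul j hfy hgy
  have hfj := differentiableAt_pd hf j
  have hgj := differentiableAt_pd hg j
  rw [pd_congr j hpd, pd_add j (hfd.fun_mul hgj) (hfj.fun_mul hgd), pd_mul j hfd hgj,
    pd_mul j hfj hgd]
  ring

lemma lap3_comp {φ φ' : ℝ → ℝ} {φ'' : ℝ} (hφ : ∀ᶠ t in 𝓝 (f x), HasDerivAt φ (φ' t) t)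
    (hφ' : HasDerivAt φ' φ'' (f x)) (hf : ContDiffAt ℝ 2 f x) :
    lap3 (fun y ↦ φ (f y)) x = φ'' * ∑ j, pd j f x ^ 2 + φ' (f x) * lap3 f x := by
  have hfd := hf.differentiableAt two_ne_zero
  rw [lap3, lap3, Finset.mul_sum, Finset.mul_sum, ← Finset.sum_add_distrib]
  refine Finset.sum_congr rfl fun j _ ↦ ?_
  have hpd : (fun y ↦ pd j (fun y ↦ φ (f y)) y) =ᶠ[𝓝 x] fun y ↦ φ' (f y) * pd j f y := by
    filter_upwards [eventually_differentiableAt_of_contDiffAt hf two_ne_zero,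
      hfd.continuousAt.eventually hφ] with y hfy hφy using pd_comp j hφy hfy
  rw [pd_congr j hpd, pd_mul j (hφ'.differentiableAt.fun_comp' x hfd) (differentiableAt_pd hf j),
    pd_comp j hφ' hfd]
  ring

lemma lap3_pd_comm (hf : ContDiffAt ℝ 3 f x) (i : Fin 3) : lap3 (pd i f) x = pd i (lap3 f) x := by
  have hpd (j : Fin 3) : ContDiffAt ℝ 2 (pd j f) x := contDiffAt_pd j hf (by norm_num)
  have hcomm (j : Fin 3) : pd j (pd i f) =ᶠ[𝓝 x] pd i (pd j f) :=
    ((hf.of_le (by norm_num)).eventually (by simp)).mono fun y hy ↦ pd_pd_comm j i hy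
  have hsum : pd i (lap3 f) x = ∑ j, pd i (pd j (pd j f)) x := by
    rw [pd, show lap3 f = fun y ↦ ∑ j, pd j (pd j f) y from rfl,
      fderiv_fun_sum fun j _ ↦ differentiableAt_pd (hpd j) j, sum_apply]
    rfl
  rw [hsum]
  exact Finset.sum_congr rfl fun j _ ↦ (pd_congr j (hcomm j)).trans (pd_pd_comm j i (hpd j))

end Laplacian

section AxialField

/-- The velocity `a(x) x - b(x) e₃`. Its spherical components are
`u_r = a r - b cos θ`, `u_θ = b sin θ` and `u_φ = 0`. -/
def axialField (a b : V3 → ℝ) (x : V3) : V3 := a x • x - b x • e3 2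

lemma axialField_apply (a b : V3 → ℝ) (x : V3) (i : Fin 3) :
    axialField a b x i = a x * x i - b x * e3 2 i := rfl

lemma e3_apply (j i : Fin 3) : e3 j i = if i = j then 1 else 0 := by simp [e3]

lemma norm_sq_eq_add_add (x : V3) : ‖x‖ ^ 2 = x 0 ^ 2 + x 1 ^ 2 + x 2 ^ 2 := by
  simp [EuclideanSpace.norm_sq_eq, Fin.sum_univ_three]

lemma rho_nonneg (x : V3) : 0 ≤ rho x := sqrt_nonneg _

lemma rho_sq (x : V3) : rho x ^ 2 = ‖x‖ ^ 2 - x 2 ^ 2 := by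
  rw [rho, sq_sqrt (by positivity), norm_sq_eq_add_add, add_sub_cancel_right]

lemma uPc_axialField (a b : V3 → ℝ) (x : V3) : uPc (axialField a b) x = 0 := by
  simp [uPc, axialField_apply, e3_apply, mul_assoc, mul_comm (x 0)]

lemma uRc_axialField (a b : V3 → ℝ) (x : V3) :
    uRc (axialField a b) x = a x * ‖x‖ ^ 2 / ‖x‖ - b x * x 2 / ‖x‖ := by
  simp only [uRc, axialField_apply, e3_apply, norm_sq_eq_add_add, Fin.reduceEq, if_true, if_false]
  ring

lemma uTc_axialField (a b : V3 → ℝ) (x : V3) :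
    uTc (axialField a b) x =
      a x * rho x ^ 2 * x 2 / (‖x‖ * rho x) - (a x * x 2 - b x) * rho x / ‖x‖ := by
  simp only [uTc, axialField_apply, e3_apply, rho_sq, norm_sq_eq_add_add, Fin.reduceEq,
    if_true, if_false]
  ring

lemma axisymOn_axialField {a b : V3 → ℝ} {Ω : Set V3}
    (ha : ∀ x ∈ Ω, ∀ y ∈ Ω, ‖x‖ = ‖y‖ → x 2 = y 2 → a x = a y)
    (hb : ∀ x ∈ Ω, ∀ y ∈ Ω, ‖x‖ = ‖y‖ → x 2 = y 2 → b x = b y) :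
    AxisymOn (axialField a b) Ω := fun x hx y hy hr hz ↦ by
  have hrho : rho x = rho y :=
    (sq_eq_sq₀ (rho_nonneg x) (rho_nonneg y)).1 (by rw [rho_sq, rho_sq, hr, hz])
  simp only [uRc_axialField, uTc_axialField, uPc_axialField, ha x hx y hy hr hz,
    hb x hx y hy hr hz, hr, hz, hrho, and_self]

variable {a b : V3 → ℝ} {x : V3}

lemma pd_axialField (ha : DifferentiableAt ℝ a x) (hb : DifferentiableAt ℝ b x) (i j : Fin 3) :
    pd j (fun z ↦ axialField a b z i) x =
      a x * (if i = j then 1 else 0) + pd j a x * x i - pd j b x * e3 2 i := by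
  have hcoord : DifferentiableAt ℝ (fun z : V3 ↦ z i) x := by fun_prop
  simp only [axialField_apply]
  rw [pd_sub j (ha.fun_mul hcoord) (hb.mul_const _), pd_mul j ha hcoord,
    pd_mul j hb (differentiableAt_const _), pd_const, pd_coord]
  ring

lemma lap3_axialField (ha : ContDiffAt ℝ 2 a x) (hb : ContDiffAt ℝ 2 b x) (i : Fin 3) :
    lap3 (fun z ↦ axialField a b z i) x = 2 * pd i a x + lap3 a x * x i - lap3 b x * e3 2 i := by
  have hcoord : ContDiffAt ℝ 2 (fun z : V3 ↦ z i) x := by fun_prop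
  simp only [axialField_apply]
  rw [lap3_sub (ha.mul hcoord) (hb.mul contDiffAt_const), lap3_mul ha hcoord,
    lap3_mul hb contDiffAt_const, lap3_coord, lap3_const]
  simp [pd_coord, pd_const]

lemma sum_axialField_mul_pd (a b f : V3 → ℝ) (x : V3) :
    ∑ j, axialField a b x j * pd j f x = a x * ∑ j, x j * pd j f x - b x * pd 2 f x := by
  simp only [axialField_apply, e3_apply, sub_mul, mul_assoc, Finset.sum_sub_distrib,
    ← Finset.mul_sum, ite_mul, one_mul, zero_mul, Finset.sum_ite_eq', Finset.mem_univ, if_true]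

lemma sum_axialField_mul_pd_axialField (ha : DifferentiableAt ℝ a x) (hb : DifferentiableAt ℝ b x)
    (i : Fin 3) :
    ∑ j, axialField a b x j * pd j (fun z ↦ axialField a b z i) x =
      a x * axialField a b x i + x i * ∑ j, axialField a b x j * pd j a x
        - e3 2 i * ∑ j, axialField a b x j * pd j b x := by
  simp only [pd_axialField ha hb, mul_sub, mul_add, Finset.sum_sub_distrib, Finset.sum_add_distrib,
    mul_ite, mul_one, mul_zero, Finset.sum_ite_eq, Finset.mem_univ, if_true, Finset.mul_sum]
  congr 2
  · ring
  · exact Finset.sum_congr rfl fun j _ ↦ by ring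
  · exact funext fun j ↦ by ring

lemma sum_pd_axialField (ha : DifferentiableAt ℝ a x) (hb : DifferentiableAt ℝ b x) :
    ∑ j, pd j (fun z ↦ axialField a b z j) x = 3 * a x + ∑ j, x j * pd j a x - pd 2 b x := by
  simp only [pd_axialField ha hb, Fin.sum_univ_three, e3_apply, Fin.reduceEq, if_true, if_false]
  ring

lemma lap3_pd_of_burgers (hb : ContDiffAt ℝ 3 b x)
    (hburgers : ∀ᶠ z in 𝓝 x, lap3 b z + b z * pd 2 b z = 0) :
    lap3 (pd 2 b) x = -(b x * pd 2 (pd 2 b) x + pd 2 b x ^ 2) := by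
  have hbd := hb.differentiableAt three_ne_zero
  have had := differentiableAt_pd (hb.of_le (by norm_num)) 2
  have hlap : lap3 b =ᶠ[𝓝 x] fun z ↦ 0 - b z * pd 2 b z := by
    filter_upwards [hburgers] with z hz using by linear_combination hz
  rw [lap3_pd_comm hb, pd_congr 2 hlap, pd_sub 2 (differentiableAt_const _) (hbd.fun_mul had),
    pd_const, pd_mul 2 hbd had]
  ring

-- Since `x · ∇b = -b` and `x · ∇∂₃b = -2 ∂₃b`, the momentum equation collapses to a combination
-- of the Burgers equation `Δb + b ∂₃b = 0` and its `x₃`-derivative.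
lemma nsEq_axialField_of_burgers (hb : ContDiffAt ℝ 3 b x)
    (hburgers : ∀ᶠ z in 𝓝 x, lap3 b z + b z * pd 2 b z = 0)
    (hbr : ∑ j, x j * pd j b x = -b x) (har : ∑ j, x j * pd j (pd 2 b) x = -2 * pd 2 b x) :
    NSEq (axialField (pd 2 b) b) (fun z ↦ 2 * pd 2 b z) x := by
  have hb2 : ContDiffAt ℝ 2 b x := hb.of_le (by norm_num)
  have ha2 : ContDiffAt ℝ 2 (pd 2 b) x := contDiffAt_pd 2 hb (by norm_num)
  have hbd := hb2.differentiableAt two_ne_zero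
  have had := ha2.differentiableAt two_ne_zero
  refine ⟨fun i ↦ ?_, ?_⟩
  · have hpres : pd i (fun z ↦ 2 * pd 2 b z) x = 2 * pd i (pd 2 b) x := by
      rw [pd_mul i (differentiableAt_const _) had, pd_const, zero_mul, add_zero]
    rw [lap3_axialField ha2 hb2, sum_axialField_mul_pd_axialField had hbd,
      sum_axialField_mul_pd, sum_axialField_mul_pd, hpres, hbr, har, axialField_apply]
    linear_combination e3 2 i * hburgers.self_of_nhds - x i * lap3_pd_of_burgers hb hburgers
  · rw [sum_pd_axialField had hbd, har]
    ring

end AxialField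

section ConicalProfile

/-- The cosine of the polar angle, `cos θ = x₃ / r`. -/
def cosPolar (x : V3) : ℝ := x 2 * ‖x‖⁻¹

/-- The `(-1)`-homogeneous axisymmetric function `r⁻¹ w(cos θ)`. -/
def conicalProfile (w : ℝ → ℝ) (x : V3) : ℝ := ‖x‖⁻¹ * w (cosPolar x)

/-- The velocity `∂₃b x - b e₃` built from `b = r⁻¹ w(cos θ)`. -/
def conicalVelocity (w : ℝ → ℝ) : V3 → V3 :=
  axialField (pd 2 (conicalProfile w)) (conicalProfile w)

/-- The pressure `2 ∂₃b` accompanying `conicalVelocity w`. -/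
def conicalPressure (w : ℝ → ℝ) (x : V3) : ℝ := 2 * pd 2 (conicalProfile w) x

lemma cosPolar_smul {t : ℝ} (ht : 0 < t) (x : V3) : cosPolar (t • x) = cosPolar x := by
  have := ht.ne'
  rw [cosPolar, cosPolar, norm_smul, norm_of_nonneg ht.le, PiLp.smul_apply, smul_eq_mul]
  field_simp

lemma conicalProfile_smul (w : ℝ → ℝ) {t : ℝ} (ht : 0 < t) (x : V3) :
    conicalProfile w (t • x) = t⁻¹ * conicalProfile w x := by
  rw [conicalProfile, conicalProfile, cosPolar_smul ht, norm_smul, norm_of_nonneg ht.le, mul_inv,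
    mul_assoc]

lemma pd_conicalProfile_smul (w : ℝ → ℝ) (j : Fin 3) {t : ℝ} (ht : 0 < t) (x : V3) :
    pd j (conicalProfile w) (t • x) = (t ^ 2)⁻¹ * pd j (conicalProfile w) x := by
  rw [pd_smul_of_homogeneous j ht.ne' (conicalProfile_smul w ht), ← mul_inv, sq]

lemma conicalVelocity_smul (w : ℝ → ℝ) {t : ℝ} (ht : 0 < t) (x : V3) :
    conicalVelocity w (t • x) = t⁻¹ • conicalVelocity w x := by
  have hscale : (t ^ 2)⁻¹ * t = t⁻¹ := by field_simp
  simp only [conicalVelocity, axialField, pd_conicalProfile_smul w 2 ht, conicalProfile_smul w ht,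
    smul_sub, smul_smul, mul_right_comm _ _ t, hscale]

lemma conicalPressure_smul (w : ℝ → ℝ) {t : ℝ} (ht : 0 < t) (x : V3) :
    conicalPressure w (t • x) = (t ^ 2)⁻¹ * conicalPressure w x := by
  rw [conicalPressure, conicalPressure, pd_conicalProfile_smul w 2 ht, mul_left_comm]

variable {x : V3}

lemma pd_norm_inv (hx : x ≠ 0) (j : Fin 3) : pd j (fun y ↦ ‖y‖⁻¹) x = -(x j * ‖x‖⁻¹ ^ 3) := by
  have hr : ‖x‖ ≠ 0 := norm_ne_zero_iff.2 hx
  have hsq : HasFDerivAt (fun y : V3 ↦ ‖y‖ ^ 2) _ x := (hasStrictFDerivAt_norm_sq x).hasFDerivAt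
  have hpd : pd j (fun y ↦ ‖y‖ ^ 2) x = 2 * x j := by
    rw [pd, hsq.fderiv]
    simp [e3, EuclideanSpace.inner_single_right]
  have hinv := (hasDerivAt_sqrt (pow_ne_zero 2 hr)).inv (by simpa using hr)
  have h := pd_comp j hinv hsq.differentiableAt
  simp only [Pi.inv_apply, sqrt_sq (norm_nonneg _), hpd] at h
  rw [h]
  field_simp

lemma contDiffAt_norm_inv {n : WithTop ℕ∞} (hx : x ≠ 0) :
    ContDiffAt ℝ n (fun y : V3 ↦ ‖y‖⁻¹) x :=
  (contDiffAt_norm ℝ hx).inv (norm_ne_zero_iff.2 hx)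

lemma contDiffAt_cosPolar {n : WithTop ℕ∞} (hx : x ≠ 0) : ContDiffAt ℝ n cosPolar x :=
  ContDiffAt.mul (by fun_prop) (contDiffAt_norm_inv hx)

lemma norm_inv_sq_mul (hx : x ≠ 0) : ‖x‖⁻¹ ^ 2 * (x 0 ^ 2 + x 1 ^ 2 + x 2 ^ 2) = 1 := by
  rw [← norm_sq_eq_add_add, ← mul_pow, inv_mul_cancel₀ (norm_ne_zero_iff.2 hx), one_pow]

lemma lap3_norm_inv (hx : x ≠ 0) : lap3 (fun y ↦ ‖y‖⁻¹) x = 0 := by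
  have hpd (j : Fin 3) : pd j (pd j fun y ↦ ‖y‖⁻¹) x = 3 * x j ^ 2 * ‖x‖⁻¹ ^ 5 - ‖x‖⁻¹ ^ 3 := by
    have hcoord : DifferentiableAt ℝ (fun y : V3 ↦ y j) x := by fun_prop
    have hs := (contDiffAt_norm_inv (n := 1) hx).differentiableAt one_ne_zero
    have hcube := hasDerivAt_pow 3 ‖x‖⁻¹
    have heq : pd j (fun y ↦ ‖y‖⁻¹) =ᶠ[𝓝 x] fun y ↦ 0 - y j * ‖y‖⁻¹ ^ 3 := by
      filter_upwards [isOpen_ne.mem_nhds hx] with y hy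
      rw [pd_norm_inv hy, zero_sub]
    rw [pd_congr j heq, pd_sub j (differentiableAt_const _) (hcoord.fun_mul (hs.fun_pow 3)),
      pd_const, pd_mul j hcoord (hs.fun_pow 3), pd_comp j hcube hs, pd_coord, pd_norm_inv hx]
    simp only [Nat.cast_ofNat, Nat.add_one_sub_one, if_true]
    ring
  rw [lap3, Fin.sum_univ_three, hpd, hpd, hpd]
  linear_combination 3 * ‖x‖⁻¹ ^ 3 * norm_inv_sq_mul hx

lemma pd_cosPolar (hx : x ≠ 0) (j : Fin 3) :
    pd j cosPolar x = ‖x‖⁻¹ * (e3 2 j - cosPolar x * (x j * ‖x‖⁻¹)) := by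
  have hs := (contDiffAt_norm_inv (n := 1) hx).differentiableAt one_ne_zero
  rw [show cosPolar = fun y ↦ y 2 * ‖y‖⁻¹ from rfl, pd_mul j (by fun_prop) hs, pd_coord,
    pd_norm_inv hx, e3_apply]
  simp only [eq_comm]
  ring

lemma lap3_cosPolar (hx : x ≠ 0) : lap3 cosPolar x = -2 * cosPolar x * ‖x‖⁻¹ ^ 2 := by
  rw [show cosPolar = fun y ↦ y 2 * ‖y‖⁻¹ from rfl, lap3_mul (by fun_prop) (contDiffAt_norm_inv hx),
    lap3_norm_inv hx, lap3_coord]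
  simp only [pd_coord, pd_norm_inv hx, ite_mul, one_mul, zero_mul, Finset.sum_ite_eq,
    Finset.mem_univ, if_true]
  ring

lemma sum_sq_pd_cosPolar (hx : x ≠ 0) :
    ∑ j, pd j cosPolar x ^ 2 = (1 - cosPolar x ^ 2) * ‖x‖⁻¹ ^ 2 := by
  simp only [pd_cosPolar hx, Fin.sum_univ_three, e3_apply, cosPolar, Fin.reduceEq, if_true,
    if_false]
  linear_combination x 2 ^ 2 * ‖x‖⁻¹ ^ 4 * norm_inv_sq_mul hx

lemma sum_pd_norm_inv_mul_pd_cosPolar (hx : x ≠ 0) :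
    ∑ j, pd j (fun y ↦ ‖y‖⁻¹) x * pd j cosPolar x = 0 := by
  simp only [pd_cosPolar hx, pd_norm_inv hx, Fin.sum_univ_three, e3_apply, cosPolar,
    Fin.reduceEq, if_true, if_false]
  linear_combination x 2 * ‖x‖⁻¹ ^ 4 * norm_inv_sq_mul hx

lemma pd_two_conicalProfile_of_hasDerivAt {w : ℝ → ℝ} {w' : ℝ} (hx : x ≠ 0)
    (hw : HasDerivAt w w' (cosPolar x)) :
    pd 2 (conicalProfile w) x =
      ‖x‖⁻¹ ^ 2 * ((1 - cosPolar x ^ 2) * w' - cosPolar x * w (cosPolar x)) := by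
  have hs := (contDiffAt_norm_inv (n := 1) hx).differentiableAt one_ne_zero
  have hy := (contDiffAt_cosPolar (n := 1) hx).differentiableAt one_ne_zero
  rw [show conicalProfile w = fun y ↦ ‖y‖⁻¹ * w (cosPolar y) from rfl,
    pd_mul 2 hs (hw.differentiableAt.fun_comp' x hy), pd_comp 2 hw hy, pd_norm_inv hx,
    pd_cosPolar hx, e3_apply]
  simp only [cosPolar, if_true]
  ring

lemma lap3_conicalProfile {w w' : ℝ → ℝ} {w'' : ℝ} (hx : x ≠ 0)
    (hwd : ContDiffAt ℝ 2 w (cosPolar x)) (hw : ∀ᶠ y in 𝓝 (cosPolar x), HasDerivAt w (w' y) y)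
    (hw' : HasDerivAt w' w'' (cosPolar x)) :
    lap3 (conicalProfile w) x =
      ‖x‖⁻¹ ^ 3 * ((1 - cosPolar x ^ 2) * w'' - 2 * cosPolar x * w' (cosPolar x)) := by
  have hy : ContDiffAt ℝ 2 cosPolar x := contDiffAt_cosPolar hx
  have hyd := hy.differentiableAt two_ne_zero
  have hcross : ∑ j, pd j (fun y ↦ ‖y‖⁻¹) x * pd j (fun y ↦ w (cosPolar y)) x = 0 := by
    simp only [pd_comp _ hw.self_of_nhds hyd, mul_left_comm _ (w' _), ← Finset.mul_sum,
      sum_pd_norm_inv_mul_pd_cosPolar hx, mul_zero]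
  rw [show conicalProfile w = fun y ↦ ‖y‖⁻¹ * w (cosPolar y) from rfl,
    lap3_mul (contDiffAt_norm_inv hx) (hwd.fun_comp x hy), hcross, lap3_norm_inv hx,
    lap3_comp hw hw' hy, sum_sq_pd_cosPolar hx, lap3_cosPolar hx]
  ring

lemma isOpen_compl_axis3 : IsOpen axis3ᶜ := by
  have h (i : Fin 3) : IsClosed {x : V3 | x i = 0} := isClosed_eq (by fun_prop) continuous_const
  exact ((h 0).inter (h 1)).isOpen_compl

lemma ne_zero_of_notMem_axis3 (hx : x ∈ axis3ᶜ) : x ≠ 0 := by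
  rintro rfl
  simp [axis3] at hx

lemma cosPolar_mem_Ioo (hx : x ∈ axis3ᶜ) : cosPolar x ∈ Set.Ioo (-1) 1 := by
  have hr := norm_pos_iff.2 (ne_zero_of_notMem_axis3 hx)
  have hsq : x 2 ^ 2 < ‖x‖ ^ 2 := by
    have hne : x 0 ^ 2 + x 1 ^ 2 ≠ 0 := fun h ↦ hx
      (by constructor <;> nlinarith [sq_nonneg (x 0), sq_nonneg (x 1)])
    have : 0 < x 0 ^ 2 + x 1 ^ 2 := lt_of_le_of_ne (by positivity) hne.symm
    rw [norm_sq_eq_add_add]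
    linarith
  rw [Set.mem_Ioo, ← abs_lt, cosPolar, ← div_eq_mul_inv, abs_div, abs_norm, div_lt_one hr]
  exact abs_lt_of_sq_lt_sq hsq hr.le

lemma contDiffOn_conicalProfile {n : WithTop ℕ∞} {w : ℝ → ℝ}
    (hw : ContDiffOn ℝ n w (Set.Ioo (-1) 1)) : ContDiffOn ℝ n (conicalProfile w) axis3ᶜ :=
  fun x hx ↦
    have hx0 := ne_zero_of_notMem_axis3 hx
    have hwx := hw.contDiffAt (isOpen_Ioo.mem_nhds (cosPolar_mem_Ioo hx))
    ((contDiffAt_norm_inv hx0).mul (hwx.comp x (contDiffAt_cosPolar hx0))).contDiffWithinAt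

lemma cone3_diff_poles_subset : cone3 (sphere2 \ {S3, N3}) ⊆ axis3ᶜ := by
  rintro x ⟨-, hsphere, hpoles⟩ ⟨h0, h1⟩
  have haxis : ‖x‖⁻¹ • x = EuclideanSpace.single 2 (‖x‖⁻¹ * x 2) := by
    ext i
    fin_cases i <;> simp [h0, h1]
  rw [haxis] at hsphere hpoles
  have habs : |‖x‖⁻¹ * x 2| = 1 := by
    simpa only [sphere2, mem_sphere_zero_iff_norm, PiLp.norm_single, norm_eq_abs] using hsphere
  rcases eq_or_eq_neg_of_abs_eq habs with h | h
  · exact hpoles (Or.inr (by rw [h]; rfl))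
  · exact hpoles (Or.inl (by rw [h]; rfl))

namespace IsRiccatiSolution

variable {c : ℝ} {w : ℝ → ℝ} (hw : IsRiccatiSolution c w) (hx : x ∈ axis3ᶜ)
include hw hx

lemma contDiffAt_conicalProfile : ContDiffAt ℝ (⊤ : ℕ∞) (conicalProfile w) x :=
  (contDiffOn_conicalProfile hw.contDiffOn).contDiffAt (isOpen_compl_axis3.mem_nhds hx)

lemma pd_two_conicalProfile : pd 2 (conicalProfile w) x =
    ‖x‖⁻¹ ^ 2 * (c - (1 - cosPolar x ^ 2) * w (cosPolar x) ^ 2 / 2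
      - cosPolar x * w (cosPolar x)) := by
  have hy := cosPolar_mem_Ioo hx
  have hy0 := (one_sub_sq_pos hy).ne'
  rw [pd_two_conicalProfile_of_hasDerivAt (ne_zero_of_notMem_axis3 hx) (hw _ hy)]
  field_simp

lemma burgers_conicalProfile :
    lap3 (conicalProfile w) x + conicalProfile w x * pd 2 (conicalProfile w) x = 0 := by
  have hy := cosPolar_mem_Ioo hx
  have hy0 := (one_sub_sq_pos hy).ne'
  have hnhds := isOpen_Ioo.mem_nhds hy
  have hw' : HasDerivAt (fun y ↦ c / (1 - y ^ 2) - w y ^ 2 / 2) _ (cosPolar x) :=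
    ((hasDerivAt_const _ c).fun_div ((hasDerivAt_pow 2 (cosPolar x)).const_sub 1) hy0).fun_sub
      (((hw _ hy).fun_pow 2).div_const 2)
  rw [lap3_conicalProfile (ne_zero_of_notMem_axis3 hx)
    ((hw.contDiffOn.contDiffAt hnhds).of_le (WithTop.coe_le_coe.2 (le_top : (2 : ℕ∞) ≤ ⊤)))
    (eventually_of_mem hnhds hw) hw',
    hw.pd_two_conicalProfile hx, conicalProfile]
  simp only [Nat.cast_ofNat]
  field_simp
  ring

lemma contDiffAt_pd_conicalProfile (j : Fin 3) :
    ContDiffAt ℝ (⊤ : ℕ∞) (pd j (conicalProfile w)) x :=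
  contDiffAt_pd j (hw.contDiffAt_conicalProfile hx) le_rfl

lemma contDiffAt_conicalVelocity : ContDiffAt ℝ (⊤ : ℕ∞) (conicalVelocity w) x :=
  ((hw.contDiffAt_pd_conicalProfile hx 2).smul contDiffAt_id).sub
    ((hw.contDiffAt_conicalProfile hx).smul contDiffAt_const)

lemma contDiffAt_conicalPressure : ContDiffAt ℝ (⊤ : ℕ∞) (conicalPressure w) x :=
  contDiffAt_const.mul (hw.contDiffAt_pd_conicalProfile hx 2)

lemma nsEq_conicalVelocity : NSEq (conicalVelocity w) (conicalPressure w) x := by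
  have hb := hw.contDiffAt_conicalProfile hx
  have hb3 : ContDiffAt ℝ 3 (conicalProfile w) x :=
    hb.of_le (WithTop.coe_le_coe.2 (le_top : (3 : ℕ∞) ≤ ⊤))
  refine nsEq_axialField_of_burgers hb3 ?_ ?_ ?_
  · filter_upwards [isOpen_compl_axis3.mem_nhds hx] with z hz using hw.burgers_conicalProfile hz
  · have := sum_coord_mul_pd_of_homogeneous (n := -1) (hb3.differentiableAt three_ne_zero)
      fun t ht ↦ by rw [conicalProfile_smul w ht, zpow_neg_one]
    simpa only [Int.cast_neg, Int.cast_one, neg_one_mul] using this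
  · have := sum_coord_mul_pd_of_homogeneous (n := -2)
      (differentiableAt_pd (hb3.of_le (by norm_num)) 2) fun t ht ↦ by
        rw [pd_conicalProfile_smul w 2 ht, zpow_neg, zpow_ofNat]
    simpa only [Int.cast_neg, Int.cast_ofNat] using this

end IsRiccatiSolution

lemma IsRiccatiSolution.axisymOn_conicalVelocity {c : ℝ} {w : ℝ → ℝ}
    (hw : IsRiccatiSolution c w) : AxisymOn (conicalVelocity w) axis3ᶜ := by
  refine axisymOn_axialField (fun x hx y hy hr hz ↦ ?_) (fun x _ y _ hr hz ↦ ?_)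
  · simp only [hw.pd_two_conicalProfile hx, hw.pd_two_conicalProfile hy, cosPolar, hr, hz]
  · simp only [conicalProfile, cosPolar, hr, hz]

end ConicalProfile

section Poles

variable {x : V3}

lemma cosPolar_eq_of_mem_sphere2 (hx : x ∈ sphere2) : cosPolar x = x 2 := by
  rw [cosPolar, mem_sphere_zero_iff_norm.1 hx, inv_one, mul_one]

lemma conicalProfile_eq_of_mem_sphere2 (w : ℝ → ℝ) (hx : x ∈ sphere2) :
    conicalProfile w x = w (x 2) := by
  rw [conicalProfile, cosPolar_eq_of_mem_sphere2 hx, mem_sphere_zero_iff_norm.1 hx, inv_one,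
    one_mul]

lemma sphere2_diff_poles_subset : sphere2 \ {S3, N3} ⊆ axis3ᶜ := fun x hx ↦ by
  have hr : ‖x‖ = 1 := mem_sphere_zero_iff_norm.1 hx.1
  refine cone3_diff_poles_subset ⟨norm_ne_zero_iff.1 (hr ▸ one_ne_zero), ?_⟩
  rwa [hr, inv_one, one_smul]

variable {σ : ℝ} (hσ : σ ^ 2 = 1)
include hσ

lemma log_dist_pole (hx : x ∈ sphere2) :
    log (dist x (EuclideanSpace.single 2 σ)) = log (2 * (1 - σ * x 2)) / 2 := by
  have hr := norm_sq_eq_add_add x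
  rw [mem_sphere_zero_iff_norm.1 hx] at hr
  have hdist : dist x (EuclideanSpace.single 2 σ) ^ 2 = 2 * (1 - σ * x 2) := by
    rw [dist_eq_norm, norm_sq_eq_add_add]
    simp only [PiLp.sub_apply, PiLp.single_apply, Fin.reduceEq, if_true, if_false, sub_zero]
    linear_combination hσ - hr
  rw [← hdist, log_pow, Nat.cast_ofNat, mul_div_cancel_left₀ _ two_ne_zero]

lemma tendsto_mul_coord_pole : Tendsto (fun x : V3 ↦ σ * x 2)
    (𝓝[sphere2 \ {S3, N3}] EuclideanSpace.single 2 σ) (𝓝[<] 1) := by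
  refine tendsto_nhdsWithin_iff.2 ⟨?_, eventually_mem_nhdsWithin.mono fun x hx ↦ ?_⟩
  · have hcont : Continuous fun x : V3 ↦ σ * x 2 := by fun_prop
    have := hcont.tendsto (EuclideanSpace.single 2 σ)
    rw [PiLp.single_apply, if_pos rfl, ← sq, hσ] at this
    exact this.mono_left nhdsWithin_le_nhds
  · have hy := cosPolar_mem_Ioo (sphere2_diff_poles_subset hx)
    rw [cosPolar_eq_of_mem_sphere2 hx.1] at hy
    have hlt : (σ * x 2) ^ 2 < 1 := by
      rw [mul_pow, hσ, one_mul]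
      linarith [one_sub_sq_pos hy]
    exact (abs_lt.1 ((sq_lt_one_iff_abs_lt_one _).1 hlt)).2

lemma mul_odd_apply_mul {w : ℝ → ℝ} (hodd : Function.Odd w) (y : ℝ) : σ * w (σ * y) = w y := by
  rcases sq_eq_one_iff.1 hσ with rfl | rfl <;> simp [hodd y]

namespace IsRiccatiSolution

variable {c : ℝ} (hc : 0 ≤ c) {w : ℝ → ℝ} (hw : IsRiccatiSolution c w) (hodd : Function.Odd w)
  (hwnn : ∀ y ∈ Set.Ico 0 1, 0 ≤ w y)
include hc hw hodd hwnn

lemma tendsto_conicalProfile_div_log_dist :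
    Tendsto (fun x ↦ conicalProfile w x / log (dist x (EuclideanSpace.single 2 σ)))
      (𝓝[sphere2 \ {S3, N3}] EuclideanSpace.single 2 σ) (𝓝 (σ * -c)) := by
  have := ((hw.tendsto_div_log hc hodd.map_zero hwnn).comp (tendsto_mul_coord_pole hσ)).const_mul σ
  refine this.congr' (eventually_mem_nhdsWithin.mono fun x hx ↦ ?_)
  dsimp only [Function.comp_apply]
  rw [conicalProfile_eq_of_mem_sphere2 w hx.1, log_dist_pole hσ hx.1, ← mul_div_assoc,
    mul_odd_apply_mul hσ hodd]

lemma tendsto_pd_conicalProfile_div_log_dist :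
    Tendsto (fun x ↦ pd 2 (conicalProfile w) x / log (dist x (EuclideanSpace.single 2 σ)))
      (𝓝[sphere2 \ {S3, N3}] EuclideanSpace.single 2 σ) (𝓝 c) := by
  have := (hw.tendsto_axialDeriv_div_log hc hodd.map_zero hwnn).comp (tendsto_mul_coord_pole hσ)
  refine this.congr' (eventually_mem_nhdsWithin.mono fun x hx ↦ ?_)
  dsimp only [Function.comp_apply]
  rw [hw.pd_two_conicalProfile (sphere2_diff_poles_subset hx), cosPolar_eq_of_mem_sphere2 hx.1,
    mem_sphere_zero_iff_norm.1 hx.1, log_dist_pole hσ hx.1, ← mul_odd_apply_mul hσ hodd (x 2),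
    mul_pow, mul_pow, hσ, mul_left_comm (x 2), ← mul_assoc σ, inv_one]
  ring

lemma tendsto_norm_conicalVelocity_div_log_dist :
    Tendsto (fun x ↦ ‖conicalVelocity w x‖ / log (dist x (EuclideanSpace.single 2 σ)))
      (𝓝[sphere2 \ {S3, N3}] EuclideanSpace.single 2 σ) (𝓝 (-(2 * c))) := by
  have hid : Tendsto id (𝓝[sphere2 \ {S3, N3}] (EuclideanSpace.single 2 σ : V3)) _ :=
    tendsto_id.mono_left nhdsWithin_le_nhds
  have hlim := (((hw.tendsto_pd_conicalProfile_div_log_dist hσ hc hodd hwnn).smul hid).sub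
    ((hw.tendsto_conicalProfile_div_log_dist hσ hc hodd hwnn).smul_const (e3 2))).norm.neg
  have hpole : c • (EuclideanSpace.single 2 σ : V3) - (σ * -c) • e3 2 =
      EuclideanSpace.single 2 (2 * c * σ) := by
    ext i
    fin_cases i <;> simp [e3, two_mul, add_mul, mul_comm c]
  have hσ1 : |σ| = 1 := (sq_eq_sq₀ (abs_nonneg σ) zero_le_one).1 (by rw [sq_abs, hσ, one_pow])
  rw [hpole, PiLp.norm_single, norm_mul, norm_eq_abs σ, hσ1, norm_of_nonneg (by positivity),
    mul_one] at hlim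
  refine hlim.congr' ?_
  filter_upwards [eventually_mem_nhdsWithin, ((tendsto_half_log_two_mul_one_sub.comp
    (tendsto_mul_coord_pole hσ)).eventually_lt_atBot 0)] with x hx hlog
  rw [Function.comp_apply, ← log_dist_pole hσ hx.1] at hlog
  generalize log (dist x (EuclideanSpace.single 2 σ)) = L at hlog
  have hscale : conicalVelocity w x = L • ((pd 2 (conicalProfile w) x / L) • x -
      (conicalProfile w x / L) • e3 2) := by
    rw [smul_sub, smul_smul, smul_smul, mul_div_cancel₀ _ hlog.ne, mul_div_cancel₀ _ hlog.ne]
    rfl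
  rw [hscale, norm_smul, norm_of_nonpos hlog.le, neg_mul, neg_div,
    mul_div_cancel_left₀ _ hlog.ne, id]

end IsRiccatiSolution

end Poles

/-- optimality of the removable singularity theorem: solutions with exact
logarithmic rate `-α` at both poles. -/
theorem existence_log_rate_solutions (α : ℝ) (hα : 0 < α) :
    ∃ (u : V3 → V3) (p : V3 → ℝ),
      ContDiffOn ℝ (⊤:ℕ∞) u (cone3 (sphere2 \ {S3, N3})) ∧
      ContDiffOn ℝ (⊤:ℕ∞) p (cone3 (sphere2 \ {S3, N3})) ∧
      (∀ x ∈ cone3 (sphere2 \ {S3, N3}), ∀ lam : ℝ, 0 < lam →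
        u (lam • x) = lam⁻¹ • u x) ∧
      (∀ x ∈ cone3 (sphere2 \ {S3, N3}), ∀ lam : ℝ, 0 < lam →
        p (lam • x) = (lam ^ 2)⁻¹ * p x) ∧
      AxisymOn u (cone3 (sphere2 \ {S3, N3})) ∧
      (∀ x ∈ cone3 (sphere2 \ {S3, N3}), uPc u x = 0) ∧
      (∀ x ∈ cone3 (sphere2 \ {S3, N3}), NSEq u p x) ∧
      Tendsto (fun x => ‖u x‖ / Real.log (dist x S3))
        (𝓝[sphere2 \ {S3, N3}] S3) (𝓝 (-α)) ∧
      Tendsto (fun x => ‖u x‖ / Real.log (dist x N3))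
        (𝓝[sphere2 \ {S3, N3}] N3) (𝓝 (-α)) := by
  obtain ⟨w, hw, hodd, hwnn⟩ := exists_isRiccatiSolution (half_pos hα).le
  have hrate {σ : ℝ} (hσ : σ ^ 2 = 1) :=
    hw.tendsto_norm_conicalVelocity_div_log_dist hσ (half_pos hα).le hodd hwnn
  rw [mul_div_cancel₀ α two_ne_zero] at hrate
  have hcone := cone3_diff_poles_subset
  exact ⟨conicalVelocity w, conicalPressure w,
    fun x hx ↦ (hw.contDiffAt_conicalVelocity (hcone hx)).contDiffWithinAt,
    fun x hx ↦ (hw.contDiffAt_conicalPressure (hcone hx)).contDiffWithinAt,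
    fun x _ t ht ↦ conicalVelocity_smul w ht x,
    fun x _ t ht ↦ conicalPressure_smul w ht x,
    fun x hx y hy ↦ hw.axisymOn_conicalVelocity x (hcone hx) y (hcone hy),
    fun x _ ↦ uPc_axialField _ _ x,
    fun x hx ↦ hw.nsEq_conicalVelocity (hcone hx),
    hrate (by norm_num), hrate (one_pow 2)⟩
end
end

section
/- Suppose ξ ∈ C²(ℝ² \ {0}) is radially symmetric (ξ(z) depends only on |z|) and satisfies −Δξ = e^ξ at every point of ℝ² \ {0}. Then there exist constants A > 0 and c > 0 such that ξ(z) = ln( 2c² A |z|^{c−2} / (1 + A|z|^c)² ) for all z ∈ ℝ² \ {0}. -/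
noncomputable section

open Real Filter MeasureTheory Metric Topology
open scoped ENNReal InnerProductSpace

/-- standard basis vector in `ℝ²` -/
def e2 (j : Fin 2) : V2 := EuclideanSpace.single j 1

/-- partial derivative on `ℝ²` -/
def pd2 (j : Fin 2) (f : V2 → ℝ) (x : V2) : ℝ := fderiv ℝ f x (e2 j)

/-- Laplacian on `ℝ²` -/
def lap2 (f : V2 → ℝ) (x : V2) : ℝ := ∑ j, pd2 j (fun y => pd2 j f y) x

/-!
In the logarithmic radial variable `t = log ‖z‖` the planar Laplacian of a radial function is
`‖z‖⁻² d²/dt²`, because `log ‖z‖` is harmonic with gradient of norm `‖z‖⁻¹`. Hence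
`w t = ξ + 2 t` solves the autonomous equation `w'' = -exp w`. Its energy `w' ^ 2 + 2 exp w` is a
positive constant `c ^ 2`, so `p = w'` stays in `(-c, c)` and solves the Riccati equation
`2 p' = p ^ 2 - c ^ 2`, which the Möbius map `p ↦ (c - p) / (c + p)` turns into `y' = c y`. Solving
for `p` and inserting it in the energy identity gives `exp w`.
-/

open Module Set
open scoped Laplacian

section Laplacian

lemma log_norm_eq_comp_norm_sq {E : Type*} [SeminormedAddCommGroup E] :
    (fun y : E => log ‖y‖) = (fun s => 2⁻¹ * log s) ∘ fun y => ‖y‖ ^ 2 := by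
  ext y
  simp

variable {E F : Type*} [NormedAddCommGroup E] [InnerProductSpace ℝ E]
  [NormedAddCommGroup F] [NormedSpace ℝ F]

lemma norm_fderiv_norm_sq (x : E) : ‖fderiv ℝ (fun y : E => ‖y‖ ^ 2) x‖ = 2 * ‖x‖ := by
  rw [fderiv_norm_sq_apply, ← Nat.cast_smul_eq_nsmul ℝ, norm_smul, innerSL_apply_norm, norm_natCast,
    Nat.cast_two]

lemma norm_fderiv_log_norm {x : E} (hx : x ≠ 0) :
    ‖fderiv ℝ (fun y : E => log ‖y‖) x‖ = ‖x‖⁻¹ := by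
  have hdiff : DifferentiableAt ℝ (fun y : E => ‖y‖ ^ 2) x :=
    (contDiff_norm_sq ℝ (n := 1)).contDiffAt.differentiableAt one_ne_zero
  rw [log_norm_eq_comp_norm_sq, Function.comp_def,
    ((hdiff.hasFDerivAt.log (by simpa using hx)).const_mul 2⁻¹).fderiv, norm_smul, norm_smul,
    norm_fderiv_norm_sq]
  simp only [norm_inv, norm_pow, norm_norm, norm_ofNat]
  field_simp

variable [FiniteDimensional ℝ E]

lemma laplacian_eq_sum_fderiv_fderiv {ι : Type*} [Fintype ι] (b : OrthonormalBasis ι ℝ E)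
    {f : E → F} {x : E} (hf : ContDiffAt ℝ 2 f x) :
    Δ f x = ∑ i, fderiv ℝ (fun y => fderiv ℝ f y (b i)) x (b i) := by
  have hf' : DifferentiableAt ℝ (fderiv ℝ f) x :=
    (hf.fderiv_right (m := 1) le_rfl).differentiableAt one_ne_zero
  rw [InnerProductSpace.laplacian_eq_iteratedFDeriv_orthonormalBasis f b]
  refine Finset.sum_congr rfl fun i _ => ?_
  simp [iteratedFDeriv_two_apply, fderiv_clm_apply hf' (differentiableAt_const (b i))]

lemma laplacian_comp {u : ℝ → F} {h : E → ℝ} {x : E} (hu : ContDiffAt ℝ 2 u (h x))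
    (hh : ContDiffAt ℝ 2 h x) :
    Δ (u ∘ h) x =
      ‖fderiv ℝ h x‖ ^ 2 • deriv (deriv u) (h x) + Δ h x • deriv u (h x) := by
  let b := stdOrthonormalBasis ℝ E
  have hu' : DifferentiableAt ℝ (deriv u) (h x) :=
    (hu.derivWithin (m := 1) le_rfl).differentiableAt one_ne_zero
  have hh' : DifferentiableAt ℝ (fderiv ℝ h) x :=
    (hh.fderiv_right (m := 1) le_rfl).differentiableAt one_ne_zero
  have first_deriv (v : E) : (fun y => fderiv ℝ (u ∘ h) y v) =ᶠ[𝓝 x]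
      fun y => fderiv ℝ h y v • (deriv u ∘ h) y := by
    filter_upwards [hh.eventually (by simp), hh.continuousAt.eventually (hu.eventually (by simp))]
      with y hhy huy
    rw [fderiv_comp _ (huy.differentiableAt two_ne_zero) (hhy.differentiableAt two_ne_zero)]
    simp
  have second_deriv (v : E) : fderiv ℝ (fun y => fderiv ℝ (u ∘ h) y v) x v =
      fderiv ℝ h x v ^ 2 • deriv (deriv u) (h x) +
        fderiv ℝ (fun y => fderiv ℝ h y v) x v • deriv u (h x) := by
    have huh :=
      hu'.hasDerivAt.hasFDerivAt.comp x (hh.differentiableAt two_ne_zero).hasFDerivAt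
    have hhv := (hh'.clm_apply (differentiableAt_const v)).hasFDerivAt
    rw [(first_deriv v).fderiv_eq, (hhv.fun_smul huh).fderiv]
    simp [sq, mul_smul]
  rw [laplacian_eq_sum_fderiv_fderiv b (hu.comp x hh), laplacian_eq_sum_fderiv_fderiv b hh,
    OrthonormalBasis.norm_dual b, Finset.sum_smul, Finset.sum_smul, ← Finset.sum_add_distrib]
  simp [second_deriv]

lemma laplacian_norm_sq (x : E) : Δ (fun y : E => ‖y‖ ^ 2) x = 2 * finrank ℝ E := by
  let b := stdOrthonormalBasis ℝ E
  have first_deriv (v : E) : (fun y => fderiv ℝ (fun y : E => ‖y‖ ^ 2) y v) =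
      fun y => (2 • innerSL ℝ v) y := by
    ext y
    simp [real_inner_comm]
  rw [laplacian_eq_sum_fderiv_fderiv b (contDiff_norm_sq ℝ).contDiffAt]
  simp only [first_deriv, ContinuousLinearMap.fderiv]
  simp [mul_comm]

lemma laplacian_log_norm {x : E} (hx : x ≠ 0) :
    Δ (fun y : E => log ‖y‖) x = (finrank ℝ E - 2) / ‖x‖ ^ 2 := by
  have hderiv : deriv (fun s : ℝ => 2⁻¹ * log s) = fun s => 2⁻¹ * s⁻¹ := by
    ext s
    simp
  have hx' : ‖x‖ ^ 2 ≠ 0 := by simpa using hx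
  have hlog : ContDiffAt ℝ 2 (fun s : ℝ => 2⁻¹ * log s) (‖x‖ ^ 2) :=
    contDiffAt_const.mul (contDiffAt_log.2 hx')
  rw [log_norm_eq_comp_norm_sq, laplacian_comp (h := fun y : E => ‖y‖ ^ 2) hlog
    (contDiff_norm_sq ℝ).contDiffAt, laplacian_norm_sq, norm_fderiv_norm_sq, hderiv]
  simp only [smul_eq_mul, deriv_const_mul_field', deriv_inv]
  field_simp
  ring

lemma laplacian_comp_log_norm {u : ℝ → F} {x : E} (hx : x ≠ 0) (hu : ContDiffAt ℝ 2 u (log ‖x‖)) :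
    Δ (fun y : E => u (log ‖y‖)) x = (‖x‖ ^ 2)⁻¹ •
      (deriv (deriv u) (log ‖x‖) + ((finrank ℝ E : ℝ) - 2) • deriv u (log ‖x‖)) := by
  have hlog : ContDiffAt ℝ 2 (fun y : E => log ‖y‖) x :=
    (contDiffAt_norm ℝ hx).log (norm_ne_zero_iff.2 hx)
  refine (laplacian_comp (u := u) (h := fun y : E => log ‖y‖) hu hlog).trans ?_
  rw [norm_fderiv_log_norm hx, laplacian_log_norm hx]
  module

end Laplacian

section ODE

lemma exists_eq_const_of_hasDerivAt_zero {F : Type*} [NormedAddCommGroup F] [NormedSpace ℝ F]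
    {s : Set ℝ} (hs : IsOpen s) (hs' : IsPreconnected s) {f : ℝ → F}
    (hf : ∀ t ∈ s, HasDerivAt f 0 t) : ∃ a, ∀ t ∈ s, f t = a :=
  hs.exists_is_const_of_deriv_eq_zero hs'
    (fun t ht => (hf t ht).differentiableAt.differentiableWithinAt) fun t ht => (hf t ht).deriv

variable {s : Set ℝ} {w p : ℝ → ℝ}

lemma exists_sq_add_two_mul_exp_eq_const (hs : IsOpen s) (hs' : IsPreconnected s)
    (hw : ∀ t ∈ s, HasDerivAt w (p t) t) (hp : ∀ t ∈ s, HasDerivAt p (-exp (w t)) t) :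
    ∃ K, ∀ t ∈ s, p t ^ 2 + 2 * exp (w t) = K := by
  refine exists_eq_const_of_hasDerivAt_zero hs hs' fun t ht => ?_
  refine (((hp t ht).fun_pow 2).fun_add ((hw t ht).exp.const_mul 2)).congr_deriv ?_
  push_cast
  ring

lemma exists_div_eq_mul_exp_of_riccati (hs : IsOpen s) (hs' : IsPreconnected s) {c : ℝ}
    (hp : ∀ t ∈ s, HasDerivAt p ((p t ^ 2 - c ^ 2) / 2) t) (hcp : ∀ t ∈ s, c + p t ≠ 0) :
    ∃ A, ∀ t ∈ s, (c - p t) / (c + p t) = A * exp (c * t) := by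
  have hconst : ∀ t ∈ s, HasDerivAt (fun t => (c - p t) / (c + p t) * exp (-(c * t))) 0 t := by
    intro t ht
    have hne := hcp t ht
    have hquot := ((hp t ht).const_sub c).fun_div ((hp t ht).const_add c) hne
    refine (hquot.fun_mul ((hasDerivAt_id t).const_mul c).fun_neg.exp).congr_deriv ?_
    simp only [id]
    field_simp
    ring
  obtain ⟨A, hA⟩ := exists_eq_const_of_hasDerivAt_zero hs hs' hconst
  refine ⟨A, fun t ht => ?_⟩
  rw [← hA t ht, mul_assoc, ← exp_add, neg_add_cancel, exp_zero, mul_one]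

lemma exists_exp_eq_of_liouville_ode (hs : IsOpen s) (hs' : IsPreconnected s)
    (hw : ∀ t ∈ s, HasDerivAt w (p t) t) (hp : ∀ t ∈ s, HasDerivAt p (-exp (w t)) t) :
    ∃ A c : ℝ, 0 < A ∧ 0 < c ∧ ∀ t ∈ s,
      exp (w t) = 2 * c ^ 2 * (A * exp (c * t)) / (1 + A * exp (c * t)) ^ 2 := by
  rcases s.eq_empty_or_nonempty with rfl | ⟨t₀, ht₀⟩
  · exact ⟨1, 1, by simp⟩
  obtain ⟨K, hK⟩ := exists_sq_add_two_mul_exp_eq_const hs hs' hw hp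
  obtain ⟨c, hc, rfl⟩ : ∃ c > 0, c ^ 2 = K := by
    have hK_pos : 0 < K := hK t₀ ht₀ ▸ by positivity
    exact ⟨√K, sqrt_pos.2 hK_pos, sq_sqrt hK_pos.le⟩
  have exp_eq : ∀ t ∈ s, exp (w t) = (c ^ 2 - p t ^ 2) / 2 := fun t ht => by linarith [hK t ht]
  have abs_lt_c : ∀ t ∈ s, |p t| < c := fun t ht =>
    abs_lt_of_sq_lt_sq (by linarith [hK t ht, exp_pos (w t)]) hc.le
  have add_pos : ∀ t ∈ s, 0 < c + p t := fun t ht => by linarith [(abs_lt.1 (abs_lt_c t ht)).1]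
  have sub_pos : ∀ t ∈ s, 0 < c - p t := fun t ht => by linarith [(abs_lt.1 (abs_lt_c t ht)).2]
  obtain ⟨A, hA⟩ := exists_div_eq_mul_exp_of_riccati hs hs' (c := c)
    (fun t ht => (hp t ht).congr_deriv (by rw [exp_eq t ht]; ring)) fun t ht => (add_pos t ht).ne'
  have hA_pos : 0 < A :=
    pos_of_mul_pos_left (hA t₀ ht₀ ▸ div_pos (sub_pos t₀ ht₀) (add_pos t₀ ht₀)) (exp_pos _).le
  refine ⟨A, c, hA_pos, hc, fun t ht => ?_⟩
  have hne := (add_pos t ht).ne'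
  have one_add_eq : 1 + (c - p t) / (c + p t) = 2 * c / (c + p t) := by
    field_simp
    ring
  rw [← hA t ht, one_add_eq, exp_eq t ht]
  field_simp
  ring

end ODE

section LogProfile

variable {E : Type*} [NormedAddCommGroup E] {I : Set ℝ} {ξ : E → ℝ} {e : E}

section NormedSpace

variable [NormedSpace ℝ E]

/-- The profile `t ↦ ξ (exp t • e)` of `ξ` along the ray through `e`, in the logarithmic radial
variable `t = log r`: for `‖e‖ = 1` it determines a radial `ξ` away from the origin. -/
def logProfile (ξ : E → ℝ) (e : E) (t : ℝ) : ℝ := ξ (exp t • e)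

lemma norm_exp_smul (he : ‖e‖ = 1) (t : ℝ) : ‖exp t • e‖ = exp t := by
  rw [norm_smul, he, mul_one, norm_of_nonneg (exp_pos t).le]

lemma eq_logProfile_log_norm (hI_pos : I ⊆ Ioi 0)
    (hrad : ∀ z w, ‖z‖ ∈ I → ‖z‖ = ‖w‖ → ξ z = ξ w) (he : ‖e‖ = 1) {z : E} (hz : ‖z‖ ∈ I) :
    ξ z = logProfile ξ e (log ‖z‖) :=
  hrad _ _ hz <| by rw [norm_exp_smul he, exp_log (hI_pos hz)]

lemma contDiffOn_logProfile {n : WithTop ℕ∞} (hξ : ContDiffOn ℝ n ξ {z | ‖z‖ ∈ I})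
    (he : ‖e‖ = 1) : ContDiffOn ℝ n (logProfile ξ e) (exp ⁻¹' I) :=
  hξ.comp (contDiff_exp.smul contDiff_const).contDiffOn fun t ht => by
    rwa [mem_ofPred_eq, norm_exp_smul he]

end NormedSpace

variable [InnerProductSpace ℝ E] [FiniteDimensional ℝ E]

lemma laplacian_eq_of_radial (hI : IsOpen I) (hI_pos : I ⊆ Ioi 0)
    (hξ : ContDiffOn ℝ 2 ξ {z | ‖z‖ ∈ I})
    (hrad : ∀ z w, ‖z‖ ∈ I → ‖z‖ = ‖w‖ → ξ z = ξ w) (he : ‖e‖ = 1) {z : E} (hz : ‖z‖ ∈ I) :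
    Δ ξ z = (deriv (deriv (logProfile ξ e)) (log ‖z‖) +
      (finrank ℝ E - 2) * deriv (logProfile ξ e) (log ‖z‖)) / ‖z‖ ^ 2 := by
  have hz_pos : 0 < ‖z‖ := hI_pos hz
  have hlog : log ‖z‖ ∈ exp ⁻¹' I := by rwa [mem_preimage, exp_log hz_pos]
  have hprofile : ContDiffAt ℝ 2 (logProfile ξ e) (log ‖z‖) :=
    (contDiffOn_logProfile hξ he).contDiffAt ((hI.preimage continuous_exp).mem_nhds hlog)
  have hξ_eq : ξ =ᶠ[𝓝 z] fun y => logProfile ξ e (log ‖y‖) :=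
    (continuous_norm.continuousAt.eventually_mem (hI.mem_nhds hz)).mono fun _ hy =>
      eq_logProfile_log_norm hI_pos hrad he hy
  rw [(InnerProductSpace.laplacian_congr_nhds hξ_eq).eq_of_nhds,
    laplacian_comp_log_norm (norm_pos_iff.1 hz_pos) hprofile, smul_eq_mul, smul_eq_mul,
    div_eq_inv_mul]

lemma deriv_deriv_logProfile_of_liouville (hE : finrank ℝ E = 2) (hI : IsOpen I)
    (hI_pos : I ⊆ Ioi 0) (hξ : ContDiffOn ℝ 2 ξ {z | ‖z‖ ∈ I})
    (hrad : ∀ z w, ‖z‖ ∈ I → ‖z‖ = ‖w‖ → ξ z = ξ w)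
    (heq : ∀ z, ‖z‖ ∈ I → -Δ ξ z = exp (ξ z)) (he : ‖e‖ = 1) {t : ℝ} (ht : exp t ∈ I) :
    deriv (deriv (logProfile ξ e)) t = -exp (logProfile ξ e t + 2 * t) := by
  have hnorm := norm_exp_smul he t
  have hmem : ‖exp t • e‖ ∈ I := by rwa [hnorm]
  have hlap : -(deriv (deriv (logProfile ξ e)) t / exp t ^ 2) = exp (logProfile ξ e t) := by
    simpa [laplacian_eq_of_radial hI hI_pos hξ hrad he hmem, hnorm, hE, logProfile]
      using heq _ hmem
  rw [exp_add, ← hlap, two_mul, exp_add]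
  field_simp

end LogProfile

lemma eq_log_of_exp_add_two_mul_log_eq {a r A c : ℝ} (hr : 0 < r)
    (h : exp (a + 2 * log r) =
      2 * c ^ 2 * (A * exp (c * log r)) / (1 + A * exp (c * log r)) ^ 2) :
    a = log (2 * c ^ 2 * A * r ^ (c - 2) / (1 + A * r ^ c) ^ 2) := by
  have hpow : exp (c * log r) = r ^ c := by rw [rpow_def_of_pos hr, mul_comm]
  have hsq : exp (2 * log r) = r ^ 2 := by rw [two_mul, exp_add, exp_log hr, sq]
  rw [← log_exp a, rpow_sub hr, rpow_two]
  congr 1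
  rw [exp_add, hpow, hsq] at h
  rw [eq_div_of_mul_eq (by positivity) h]
  ring

theorem radial_liouville_classification_general {E : Type*} [NormedAddCommGroup E]
    [InnerProductSpace ℝ E] [FiniteDimensional ℝ E] (hE : finrank ℝ E = 2) {I : Set ℝ}
    (hI : IsOpen I) (hI_conn : I.OrdConnected) (hI_pos : I ⊆ Ioi 0) {ξ : E → ℝ}
    (hreg : ContDiffOn ℝ 2 ξ {z | ‖z‖ ∈ I}) (hrad : ∀ z w, ‖z‖ ∈ I → ‖z‖ = ‖w‖ → ξ z = ξ w)
    (heq : ∀ z, ‖z‖ ∈ I → -Δ ξ z = exp (ξ z)) :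
    ∃ A c : ℝ, 0 < A ∧ 0 < c ∧ ∀ z, ‖z‖ ∈ I →
      ξ z = log (2 * c ^ 2 * A * ‖z‖ ^ (c - 2) / (1 + A * ‖z‖ ^ c) ^ 2) := by
  have : Nontrivial E := nontrivial_of_finrank_pos (R := ℝ) (hE ▸ two_pos)
  obtain ⟨e, he⟩ := exists_norm_eq E zero_le_one
  let u := logProfile ξ e
  have hs : IsOpen (exp ⁻¹' I) := hI.preimage continuous_exp
  have hs' : IsPreconnected (exp ⁻¹' I) := (hI_conn.preimage_mono exp_monotone).isPreconnected
  have hu : ∀ t ∈ exp ⁻¹' I, ContDiffAt ℝ 2 u t := fun t ht =>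
    (contDiffOn_logProfile hreg he).contDiffAt (hs.mem_nhds ht)
  have hw : ∀ t ∈ exp ⁻¹' I, HasDerivAt (fun t => u t + 2 * t) (deriv u t + 2) t := fun t ht => by
    simpa using ((hu t ht).differentiableAt two_ne_zero).hasDerivAt.fun_add
      ((hasDerivAt_id t).const_mul 2)
  have hp : ∀ t ∈ exp ⁻¹' I, HasDerivAt (fun t => deriv u t + 2) (-exp (u t + 2 * t)) t := by
    intro t ht
    rw [← deriv_deriv_logProfile_of_liouville hE hI hI_pos hreg hrad heq he ht]
    have hu' := ((hu t ht).derivWithin (m := 1) le_rfl).differentiableAt one_ne_zero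
    exact hu'.hasDerivAt.add_const 2
  obtain ⟨A, c, hA, hc, h⟩ := exists_exp_eq_of_liouville_ode hs hs' hw hp
  refine ⟨A, c, hA, hc, fun z hz => eq_log_of_exp_add_two_mul_log_eq (hI_pos hz) ?_⟩
  rw [eq_logProfile_log_norm hI_pos hrad he hz]
  exact h _ (by rwa [mem_preimage, exp_log (hI_pos hz)])

lemma lap2_eq_laplacian {f : V2 → ℝ} {x : V2} (hf : ContDiffAt ℝ 2 f x) : lap2 f x = Δ f x := by
  rw [laplacian_eq_sum_fderiv_fderiv (EuclideanSpace.basisFun (Fin 2) ℝ) hf]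
  simp [lap2, pd2, e2]

/-- classification of radial solutions of the Liouville equation on `ℝ² \ {0}`. -/
theorem radial_liouville_classification (ξ : V2 → ℝ)
    (hreg : ContDiffOn ℝ 2 ξ {z : V2 | z ≠ 0})
    (hrad : ∀ z w : V2, ‖z‖ = ‖w‖ → ξ z = ξ w)
    (heq : ∀ z : V2, z ≠ 0 → - lap2 ξ z = Real.exp (ξ z)) :
    ∃ A c : ℝ, 0 < A ∧ 0 < c ∧ ∀ z : V2, z ≠ 0 →
      ξ z = Real.log (2 * c ^ 2 * A * ‖z‖ ^ (c - 2) / (1 + A * ‖z‖ ^ c) ^ 2) := by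
  have hlap : ∀ z : V2, z ≠ 0 → -Δ ξ z = exp (ξ z) := fun z hz =>
    lap2_eq_laplacian (hreg.contDiffAt (isOpen_ne.mem_nhds hz)) ▸ heq z hz
  simp only [← norm_pos_iff] at hreg hlap ⊢
  exact radial_liouville_classification_general finrank_euclideanSpace_fin isOpen_Ioi
    ordConnected_Ioi Subset.rfl hreg (fun z w _ => hrad z w) hlap
end
end
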